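/- The family of semi-invariants f_{T^±}, indexed by all semi-standard linked tableaux pairs (T^-, T^+, σ), is a basis of the semi-invariant ring of the generalized Kronecker quiver as a ℂ-vector space. -/

import Mathlib

namespace QuiverSAGBI

/-- The variable `x^i_{jk}`: the `(j,k)` entry of the generic matrix `M_i`. -/
abbrev KVar (K r0 r1 : ℕ) := Fin K × Fin r1 × Fin r0

/-- The coordinate ring of the representation space of the generalized
Kronecker quiver with `K` arrows and dimension vector `(r0, r1)`. -/
abbrev KPoly (K r0 r1 : ℕ) := MvPolynomial (KVar K r0 r1) ℂ

/-- `x_v` is a greater variable than `x_w`:  `v.1 < w.1`, or `v.1 = w.1` and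
`v.2.1 < w.2.1`, or these agree and `v.2.2 < w.2.2`. -/
def VarGT {K r0 r1 : ℕ} (v w : KVar K r0 r1) : Prop :=
  v.1 < w.1 ∨ (v.1 = w.1 ∧ (v.2.1 < w.2.1 ∨ (v.2.1 = w.2.1 ∧ v.2.2 < w.2.2)))

/-- The monomial with exponent vector `a` is smaller than the one with exponent
vector `b` in the lexicographic term order: at the most significant variable
where they differ, `a` has the smaller exponent. -/
def MonLT {K r0 r1 : ℕ} (a b : KVar K r0 r1 →₀ ℕ) : Prop :=
  ∃ v, a v < b v ∧ ∀ w, VarGT w v → a w = b w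

/-- `mo` is the leading monomial (exponent vector) of `f`. -/
def IsLM {K r0 r1 : ℕ} (f : KPoly K r0 r1) (mo : KVar K r0 r1 →₀ ℕ) : Prop :=
  mo ∈ f.support ∧ ∀ m' ∈ f.support, m' = mo ∨ MonLT m' mo

/-- The substitution action of a pair of matrices `(g, h)` on the coordinate
ring: `x^i_{jk} ↦ ∑ (h⁻¹)_{j j'} x^i_{j'k'} g_{k' k}`, i.e. `M_i ↦ h⁻¹ M_i g`. -/
noncomputable def glAct {K r0 r1 : ℕ} (g : Matrix (Fin r0) (Fin r0) ℂ)
    (h : Matrix (Fin r1) (Fin r1) ℂ) : KPoly K r0 r1 →ₐ[ℂ] KPoly K r0 r1 :=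
  MvPolynomial.aeval fun v : KVar K r0 r1 =>
    ∑ j' : Fin r1, ∑ k' : Fin r0,
      MvPolynomial.C (h⁻¹ v.2.1 j' * g k' v.2.2) * MvPolynomial.X (v.1, j', k')

/-- `f` is a semi-invariant of weight `(w0, w1)`. -/
def IsSemiInvariant {K r0 r1 : ℕ} (f : KPoly K r0 r1) (w0 w1 : ℤ) : Prop :=
  ∀ (g : Matrix (Fin r0) (Fin r0) ℂ) (h : Matrix (Fin r1) (Fin r1) ℂ),
    IsUnit g.det → IsUnit h.det →
      glAct g h f = MvPolynomial.C (g.det ^ w0 * h.det ^ w1) * f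

/-- The semi-invariant ring: the linear span of all semi-invariants. -/
noncomputable def semiInvariantRing (K r0 r1 : ℕ) : Submodule ℂ (KPoly K r0 r1) :=
  Submodule.span ℂ {f | ∃ w0 w1 : ℤ, IsSemiInvariant f w0 w1}

/-- A linked tableaux pair for the generalized Kronecker quiver:
`Tm` is the tableau `T⁻` (with `r0` rows and `cm` columns, labels `(i,q)`),
`Tp` is the tableau `T⁺` (with `r1` rows and `cp` columns, labels `(i,p)`),
and `link` is a bijection of boxes sending the box labeled `(i,q)` in row `p`
of `T⁻` to a box labeled `(i,p)` lying in row `q` of `T⁺`. -/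
structure LinkedPair (K r0 r1 cm cp : ℕ) where
  Tm : Fin r0 → Fin cm → Fin K × Fin r1
  Tp : Fin r1 → Fin cp → Fin K × Fin r0
  link : Fin r0 × Fin cm ≃ Fin r1 × Fin cp
  link_row : ∀ p c, (link (p, c)).1 = (Tm p c).2
  link_label : ∀ p c, Tp (link (p, c)).1 (link (p, c)).2 = ((Tm p c).1, p)

/-- The exponent vector of `Mon(T⁺)`: a box labeled `(i,k)` in row `q` of `T⁺`
contributes the variable `x^i_{qk}`. -/
noncomputable def monExpP {K r0 r1 cm cp : ℕ} (L : LinkedPair K r0 r1 cm cp) :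
    KVar K r0 r1 →₀ ℕ :=
  ∑ q : Fin r1, ∑ c : Fin cp, Finsupp.single ((L.Tp q c).1, q, (L.Tp q c).2) 1

/-- The exponent vector of `Mon(T⁻)`: a box labeled `(i,j)` in row `p` of `T⁻`
contributes the variable `x^i_{jp}`. -/
noncomputable def monExpM {K r0 r1 cm cp : ℕ} (L : LinkedPair K r0 r1 cm cp) :
    KVar K r0 r1 →₀ ℕ :=
  ∑ p : Fin r0, ∑ c : Fin cm, Finsupp.single ((L.Tm p c).1, (L.Tm p c).2, p) 1

/-- The semi-invariant `f_{T^±}` attached to a linked tableaux pair: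
`∑_{α⁻, α⁺} sign(α⁻) sign(α⁺) Mon(α⁻ · α⁺ · T⁺)`, where `α⁺` permutes the
entries of each column of `T⁺` among its rows and `α⁻` permutes the second
entries of the labels of the boxes of `T⁺` linked to each column of `T⁻`. -/
noncomputable def pairPoly {K r0 r1 cm cp : ℕ} (L : LinkedPair K r0 r1 cm cp) :
    KPoly K r0 r1 :=
  ∑ αm : Fin cm → Equiv.Perm (Fin r0), ∑ αp : Fin cp → Equiv.Perm (Fin r1),
    ((∏ l, (Equiv.Perm.sign (αm l) : ℤ)) * ∏ c, (Equiv.Perm.sign (αp c) : ℤ)) •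
      ∏ p : Fin r0, ∏ l : Fin cm,
        MvPolynomial.X
          ((L.Tm p l).1, αp (L.link (p, l)).2 (L.link (p, l)).1, αm l p)

/-- The order on labels: `(i,p) ≤ (j,q)` iff `i < j`, or `i = j` and `p ≤ q`. -/
def LabelLE {K n : ℕ} (a b : Fin K × Fin n) : Prop :=
  a.1 < b.1 ∨ (a.1 = b.1 ∧ a.2 ≤ b.2)

/-- Strict version of the label order. -/
def LabelLT {K n : ℕ} (a b : Fin K × Fin n) : Prop :=
  a.1 < b.1 ∨ (a.1 = b.1 ∧ a.2 < b.2)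

/-- A rectangular tableau is semi-standard if its entries are weakly increasing
along each row and strictly increasing down each column. -/
def IsSemiStandardTab {rows cols K n : ℕ}
    (T : Fin rows → Fin cols → Fin K × Fin n) : Prop :=
  (∀ (i : Fin rows) (c c' : Fin cols), c ≤ c' → LabelLE (T i c) (T i c')) ∧
  (∀ (c : Fin cols) (i i' : Fin rows), i < i' → LabelLT (T i c) (T i' c))

/-- The link is semi-standard: boxes with equal labels in the same row of `T⁻`
are matched with their partners in `T⁺` in a left-to-right
order-preserving way. -/
def IsSemiStandardLink {K r0 r1 cm cp : ℕ}
    (L : LinkedPair K r0 r1 cm cp) : Prop :=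
  ∀ (p : Fin r0) (c c' : Fin cm), L.Tm p c = L.Tm p c' → c < c' →
    (L.link (p, c)).2 < (L.link (p, c')).2

/-- A semi-standard linked tableaux pair: both tableaux and the link are
semi-standard. -/
def IsSemiStandardPair {K r0 r1 cm cp : ℕ}
    (L : LinkedPair K r0 r1 cm cp) : Prop :=
  IsSemiStandardTab L.Tm ∧ IsSemiStandardTab L.Tp ∧ IsSemiStandardLink L

/-- A (nonempty) semi-standard linked tableaux pair is primitive if its leading
monomial is not the product of the leading monomials of two (nonempty)
semi-standard linked tableaux pairs. -/
def IsPrimitive {K r0 r1 cm cp : ℕ} (L : LinkedPair K r0 r1 cm cp) : Prop :=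
  IsSemiStandardPair L ∧ 0 < cm ∧
    ¬∃ (cm1 cp1 cm2 cp2 : ℕ) (L1 : LinkedPair K r0 r1 cm1 cp1)
        (L2 : LinkedPair K r0 r1 cm2 cp2) (m m1 m2 : KVar K r0 r1 →₀ ℕ),
        0 < cm1 ∧ 0 < cm2 ∧ IsSemiStandardPair L1 ∧ IsSemiStandardPair L2 ∧
        IsLM (pairPoly L) m ∧ IsLM (pairPoly L1) m1 ∧ IsLM (pairPoly L2) m2 ∧
        m = m1 + m2

/-! ### Part 1: combinatorial core -/

/-- Abstract data for one tableau of a linked pair together with a column-wise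
rearrangement: `q` is the row, `c` the column, `q'` the new row. -/
structure Side {B : Type*} (r : ℕ) (i q p c q' : B → ℕ) : Prop where
  lt : ∀ b, q b < r
  lt' : ∀ b, q' b < r
  ex : ∀ b t, t < r → ∃ b', c b' = c b ∧ q b' = t
  ex' : ∀ b t, t < r → ∃ b', c b' = c b ∧ q' b' = t
  inj : ∀ b b', c b = c b' → q b = q b' → b = b'
  inj' : ∀ b b', c b = c b' → q' b = q' b' → b = b'
  col : ∀ b b', c b = c b' → q b < q b' → i b < i b' ∨ (i b = i b' ∧ p b < p b')

namespace Side

variable {B : Type*} {r : ℕ} {i q p c q' : B → ℕ}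

theorem arrow_le (S : Side r i q p c q') {b b' : B} (hc : c b = c b') (h : q b ≤ q b') :
    i b ≤ i b' := by
  rcases h.lt_or_eq with h | h
  · rcases S.col b b' hc h with h | h <;> omega
  · rw [S.inj b b' hc h]

theorem gap (S : Side r i q p c q') : ∀ (n : ℕ) (b b' : B), c b = c b' → q b' = q b + n →
    i b = i b' → p b + n ≤ p b' := by
  intro n
  induction n with
  | zero =>
    intro b b' hc hq _
    rw [S.inj b b' hc (by omega)]; omega
  | succ n ih =>
    intro b b' hc hq hi
    obtain ⟨d, hd, hdq⟩ := S.ex b (q b + n) (by have := S.lt b'; omega)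
    have h1 := S.arrow_le (b := b) (b' := d) hd.symm (by omega)
    have h2 := S.arrow_le (b := d) (b' := b') (by omega) (by omega)
    have h3 := ih b d hd.symm hdq (by omega)
    rcases S.col d b' (by omega) (by omega) with h | h <;> omega

theorem gap' (S : Side r i q p c q') {b b' : B} (hc : c b = c b') (hq : q b ≤ q b')
    (hi : i b = i b') : p b + (q b' - q b) ≤ p b' :=
  S.gap _ b b' hc (by omega) hi

theorem pigeon [Finite B] (S : Side r i q p c q') {j : B} {t : ℕ} (h1 : q j < t)
    (h2 : t ≤ q' j) : ∃ j1, c j1 = c j ∧ t ≤ q j1 ∧ q' j1 < t := by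
  classical
  have := Fintype.ofFinite B
  have htr : t < r := lt_of_le_of_lt h2 (S.lt' j)
  let A : Finset B := Finset.univ.filter fun b => c b = c j ∧ q b < t
  let A' : Finset B := Finset.univ.filter fun b => c b = c j ∧ q' b < t
  have hA : A.card = t := by
    have : A.image q = Finset.range t := by
      ext x
      simp only [A, Finset.mem_image, Finset.mem_filter, Finset.mem_univ, true_and,
        Finset.mem_range]
      constructor
      · rintro ⟨b, hb, rfl⟩; exact hb.2
      · intro hx
        obtain ⟨b, hb, hb'⟩ := S.ex j x (by omega)
        exact ⟨b, ⟨hb, by omega⟩, hb'⟩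
    rw [← Finset.card_range t, ← this, Finset.card_image_of_injOn]
    intro b hb b' hb' h
    simp only [A, Finset.coe_filter, Finset.mem_univ, true_and, Set.mem_setOf_eq] at hb hb'
    exact S.inj b b' (by omega) h
  have hA' : A'.card = t := by
    have : A'.image q' = Finset.range t := by
      ext x
      simp only [A', Finset.mem_image, Finset.mem_filter, Finset.mem_univ, true_and,
        Finset.mem_range]
      constructor
      · rintro ⟨b, hb, rfl⟩; exact hb.2
      · intro hx
        obtain ⟨b, hb, hb'⟩ := S.ex' j x (by omega)
        exact ⟨b, ⟨hb, by omega⟩, hb'⟩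
    rw [← Finset.card_range t, ← this, Finset.card_image_of_injOn]
    intro b hb b' hb' h
    simp only [A', Finset.coe_filter, Finset.mem_univ, true_and, Set.mem_setOf_eq] at hb hb'
    exact S.inj' b b' (by omega) h
  by_contra hcon
  push Not at hcon
  have hsub : A' ⊆ A.erase j := by
    intro b hb
    simp only [A', A, Finset.mem_filter, Finset.mem_univ, true_and, Finset.mem_erase] at hb ⊢
    refine ⟨?_, hb.1, ?_⟩
    · rintro rfl; omega
    · by_contra h
      have := hcon b hb.1 (by omega)
      omega
  have hj : j ∈ A := by simp [A, h1]
  have := Finset.card_le_card hsub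
  rw [Finset.card_erase_of_mem hj] at this
  omega

end Side

section Core

variable {B : Type*} [Finite B] {r0 r1 : ℕ} {i q p c l q' p' : B → ℕ}

/-- One unit step: consecutive rows carry consecutive labels when something moves across. -/
theorem core_step (S : Side r1 i q p c q') (R : Side r0 i p q l p')
    (P : ℕ → ℕ → ℕ → Prop)
    (hS : ∀ b b', c b = c b' → q b = q' b' →
      (P (i b) (q b) (p b) ∨ P (i b') (q' b') (p' b')) → i b = i b' ∧ p b = p' b')
    (hR : ∀ b b', l b = l b' → p b = p' b' →
      (P (i b) (q b) (p b) ∨ P (i b') (q' b') (p' b')) → i b = i b' ∧ q b = q' b')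
    {u w j : B} (hcu : c u = c j) (hcw : c w = c j) (huw : q w = q u + 1)
    (hP : ∀ d, c d = c j → q d ≤ q u → P (i d) (q d) (p d))
    (hj : q j ≤ q u) (hj' : q w ≤ q' j) : i w = i u ∧ p w = p u + 1 := by
  obtain ⟨j1, hc1, hq1, hq1'⟩ := S.pigeon (j := j) (t := q w) (by omega) hj'
  obtain ⟨d, hd, hdq⟩ := S.ex j1 (q' j1) (S.lt' j1)
  have hPd := hP d (by omega) (by omega)
  obtain ⟨e1, e2⟩ := hS d j1 hd hdq (Or.inl hPd)
  have a1 := S.arrow_le (b := d) (b' := u) (by omega) (by omega)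
  have a2 := S.arrow_le (b := u) (b' := w) (by omega) (by omega)
  have a3 := S.arrow_le (b := w) (b' := j1) (by omega) (by omega)
  obtain ⟨d2, hd2, hdp⟩ := R.ex j1 (p' j1) (R.lt' j1)
  obtain ⟨e3, e4⟩ := hR d2 j1 hd2 hdp (Or.inr (by rw [← e1, ← e2, ← hdq]; exact hPd))
  have g1 := S.gap' (b := d) (b' := j1) (by omega) (by omega) e1
  have g2 := R.gap' (b := d2) (b' := j1) hd2 (by omega) e3
  have g3 := S.gap' (b := d) (b' := u) (by omega) (by omega) (by omega)
  have g4 := S.gap' (b := u) (b' := w) (by omega) (by omega) (by omega)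
  have g5 := S.gap' (b := w) (b' := j1) (by omega) (by omega) (by omega)
  omega

theorem core_main (S : Side r1 i q p c q') (R : Side r0 i p q l p') (I Q P0 : ℕ)
    (P : ℕ → ℕ → ℕ → Prop)
    (hPdef : ∀ a b d, P a b d ↔ (a < I ∨ (a = I ∧ (b < Q ∨ (b = Q ∧ d < P0)))))
    (hS : ∀ b b', c b = c b' → q b = q' b' →
      (P (i b) (q b) (p b) ∨ P (i b') (q' b') (p' b')) → i b = i b' ∧ p b = p' b')
    (hR : ∀ b b', l b = l b' → p b = p' b' →
      (P (i b) (q b) (p b) ∨ P (i b') (q' b') (p' b')) → i b = i b' ∧ q b = q' b')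
    {b d e : B} (hbI : i b = I) (hbQ : q' b = Q) (hbP : p' b = P0)
    (hd : c d = c b) (hdQ : q d = Q) (he : l e = l b) (heP : p e = P0) :
    (i d = I ∧ p d = P0) ∧ (i e = I ∧ q e = Q) := by
  have ud : ¬ P (i d) (q d) (p d) := by
    intro h
    have := hS d b hd (by omega) (Or.inl h)
    rw [hPdef] at h
    omega
  have ue : ¬ P (i e) (q e) (p e) := by
    intro h
    have := hR e b he (by omega) (Or.inl h)
    rw [hPdef] at h
    omega
  rw [hPdef] at ud ue
  rcases le_or_gt Q (q b) with hq | hq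
  · have a1 := S.arrow_le (b := d) (b' := b) hd (by omega)
    have g1 := S.gap' (b := d) (b' := b) hd (by omega) (by omega)
    have a2 := R.arrow_le (b := e) (b' := b) he (by omega)
    have g2 := R.gap' (b := e) (b' := b) he (by omega) (by omega)
    omega
  · have hp : p b < P0 := by
      by_contra hp
      have a2 := R.arrow_le (b := e) (b' := b) he (by omega)
      have g2 := R.gap' (b := e) (b' := b) he (by omega) (by omega)
      omega
    have run : ∀ n, q b + n ≤ Q → ∀ w, c w = c b → q w = q b + n →
        i w = I ∧ p w = p b + n := by
      intro n
      induction n with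
      | zero =>
        intro _ w hw hwq
        rw [S.inj w b hw (by omega)]; omega
      | succ n ih =>
        intro hn w hw hwq
        obtain ⟨u, hu, huq⟩ := S.ex b (q b + n) (by have := S.lt' b; omega)
        obtain ⟨ui, up⟩ := ih (by omega) u hu huq
        have := core_step S R P hS hR (u := u) (w := w) (j := b) hu hw (by omega)
          (by
            intro x hx hxq
            have := S.arrow_le (b := x) (b' := u) (by omega) hxq
            rw [hPdef]; omega) (by omega) (by omega)
        omega
    obtain ⟨di, dp⟩ := run (Q - q b) (by omega) d hd (by omega)
    have run2 : ∀ n, p b + n ≤ P0 → ∀ w, l w = l b → p w = p b + n →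
        i w = I ∧ q w = q b + n := by
      intro n
      induction n with
      | zero =>
        intro _ w hw hwq
        rw [R.inj w b hw (by omega)]; omega
      | succ n ih =>
        intro hn w hw hwq
        obtain ⟨u, hu, huq⟩ := R.ex b (p b + n) (by have := R.lt' b; omega)
        obtain ⟨ui, up⟩ := ih (by omega) u hu huq
        have := core_step R S (fun a b d => P a d b)
          (fun x y h1 h2 h3 => hR x y h1 h2 h3) (fun x y h1 h2 h3 => hS x y h1 h2 h3)
          (u := u) (w := w) (j := b) hu hw (by omega)
          (by
            intro x hx hxq
            have h1 := R.arrow_le (b := x) (b' := u) (by omega) hxq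
            rw [hPdef]
            by_cases hxi : i x = I
            · have := R.gap' (b := x) (b' := u) (by omega) hxq (by omega)
              omega
            · omega) (by omega) (by omega)
        omega
    obtain ⟨ei, ep⟩ := run2 (P0 - p b) (by omega) e he (by omega)
    omega

/-- If the rearranged monomial is not smaller than the original one,
then the rearrangement fixes both fillings. -/
theorem core_agree (S : Side r1 i q p c q') (R : Side r0 i p q l p')
    (hcount : ∀ I Q P0,
      (∀ I' Q' P', (I' < I ∨ (I' = I ∧ (Q' < Q ∨ (Q' = Q ∧ P' < P0)))) →
        Nat.card {b // i b = I' ∧ q' b = Q' ∧ p' b = P'} =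
          Nat.card {b // i b = I' ∧ q b = Q' ∧ p b = P'}) →
      Nat.card {b // i b = I ∧ q b = Q ∧ p b = P0} ≤
        Nat.card {b // i b = I ∧ q' b = Q ∧ p' b = P0}) :
    (∀ b b', c b = c b' → q b = q' b' → i b = i b' ∧ p b = p' b') ∧
    (∀ b b', l b = l b' → p b = p' b' → i b = i b' ∧ q b = q' b') := by
  classical
  -- the agreement statement at a value
  let G : ℕ × ℕ × ℕ → Prop := fun v =>
    (∀ b b', c b = c b' → q b = q' b' →
      ((i b, q b, p b) = v ∨ (i b', q' b', p' b') = v) → i b = i b' ∧ p b = p' b') ∧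
    (∀ b b', l b = l b' → p b = p' b' →
      ((i b, q b, p b) = v ∨ (i b', q' b', p' b') = v) → i b = i b' ∧ q b = q' b')
  have key : ∀ I Q P0, (∀ I' Q' P', (I' < I ∨ (I' = I ∧ (Q' < Q ∨ (Q' = Q ∧ P' < P0)))) →
      G (I', Q', P')) → (∀ I' Q' P', (I' < I ∨ (I' = I ∧ (Q' < Q ∨ (Q' = Q ∧ P' < P0)))) →
        Nat.card {b // i b = I' ∧ q' b = Q' ∧ p' b = P'} =
          Nat.card {b // i b = I' ∧ q b = Q' ∧ p b = P'}) → G (I, Q, P0) ∧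
        Nat.card {b // i b = I ∧ q' b = Q ∧ p' b = P0} =
          Nat.card {b // i b = I ∧ q b = Q ∧ p b = P0} := by
    intro I Q P0 ih ihc
    have hmain := fun (b d e : B) => core_main (b := b) (d := d) (e := e) S R I Q P0
      (fun a b d => (a < I ∨ (a = I ∧ (b < Q ∨ (b = Q ∧ d < P0))))) (fun _ _ _ => Iff.rfl)
      (fun x y h1 h2 h3 => by
        rcases h3 with h3 | h3
        · exact (ih _ _ _ h3).1 x y h1 h2 (Or.inl rfl)
        · exact (ih _ _ _ h3).1 x y h1 h2 (Or.inr rfl))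
      (fun x y h1 h2 h3 => by
        rcases h3 with h3 | h3
        · exact (ih _ _ _ h3).2 x y h1 h2 (Or.inl rfl)
        · exact (ih _ _ _ h3).2 x y h1 h2 (Or.inr rfl))
    choose dS hdS1 hdS2 using fun b => S.ex b (q' b) (S.lt' b)
    choose dR hdR1 hdR2 using fun b => R.ex b (p' b) (R.lt' b)
    have hm : ∀ b, (i b = I ∧ q' b = Q ∧ p' b = P0) →
        (i (dS b) = I ∧ p (dS b) = P0) ∧ (i (dR b) = I ∧ q (dR b) = Q) := by
      rintro b ⟨h1, h2, h3⟩
      exact hmain b (dS b) (dR b) h1 h2 h3 (hdS1 b) (by rw [hdS2, h2]) (hdR1 b)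
        (by rw [hdR2, h3])
    let FS : {b // i b = I ∧ q' b = Q ∧ p' b = P0} → {b // i b = I ∧ q b = Q ∧ p b = P0} :=
      fun b => ⟨dS b.1, (hm b.1 b.2).1.1, by rw [hdS2, b.2.2.1], (hm b.1 b.2).1.2⟩
    let FR : {b // i b = I ∧ q' b = Q ∧ p' b = P0} → {b // i b = I ∧ q b = Q ∧ p b = P0} :=
      fun b => ⟨dR b.1, (hm b.1 b.2).2.1, (hm b.1 b.2).2.2, by rw [hdR2, b.2.2.2]⟩
    have FSinj : Function.Injective FS := by
      rintro ⟨x, hx⟩ ⟨y, hy⟩ h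
      have h' : dS x = dS y := congrArg Subtype.val h
      apply Subtype.ext
      exact S.inj' x y (by rw [← hdS1 x, ← hdS1 y, h']) (by rw [hx.2.1, hy.2.1])
    have FRinj : Function.Injective FR := by
      rintro ⟨x, hx⟩ ⟨y, hy⟩ h
      have h' : dR x = dR y := congrArg Subtype.val h
      apply Subtype.ext
      exact R.inj' x y (by rw [← hdR1 x, ← hdR1 y, h']) (by rw [hx.2.2, hy.2.2])
    have hle := hcount I Q P0 ihc
    have hge := Nat.card_le_card_of_injective FS FSinj
    have heq := le_antisymm hge hle
    have FSsurj : Function.Surjective FS :=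
      ((Nat.bijective_iff_injective_and_card FS).2 ⟨FSinj, heq⟩).2
    have FRsurj : Function.Surjective FR :=
      ((Nat.bijective_iff_injective_and_card FR).2 ⟨FRinj, heq⟩).2
    refine ⟨⟨?_, ?_⟩, heq⟩
    · intro b b' h1 h2 h3
      rcases h3 with h3 | h3
      · simp only [Prod.mk.injEq] at h3
        obtain ⟨⟨x, hx⟩, hxb⟩ := FSsurj ⟨b, h3⟩
        have hx' : dS x = b := congrArg Subtype.val hxb
        have : x = b' := S.inj' x b' (by rw [← h1, ← hx', hdS1]) (by rw [← h2, ← hx', hdS2])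
        subst this
        omega
      · simp only [Prod.mk.injEq] at h3
        have hb : dS b' = b := S.inj _ _ (by rw [hdS1, h1]) (by rw [hdS2, h2])
        have := (hm b' h3).1
        rw [hb] at this
        omega
    · intro b b' h1 h2 h3
      rcases h3 with h3 | h3
      · simp only [Prod.mk.injEq] at h3
        obtain ⟨⟨x, hx⟩, hxb⟩ := FRsurj ⟨b, h3⟩
        have hx' : dR x = b := congrArg Subtype.val hxb
        have : x = b' := R.inj' x b' (by rw [← h1, ← hx', hdR1]) (by rw [← h2, ← hx', hdR2])
        subst this
        omega
      · simp only [Prod.mk.injEq] at h3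
        have hb : dR b' = b := R.inj _ _ (by rw [hdR1, h1]) (by rw [hdR2, h2])
        have := (hm b' h3).2
        rw [hb] at this
        omega
  have all : ∀ I Q P0, G (I, Q, P0) ∧
        Nat.card {b // i b = I ∧ q' b = Q ∧ p' b = P0} =
          Nat.card {b // i b = I ∧ q b = Q ∧ p b = P0} := by
    intro I
    induction I using Nat.strong_induction_on with
    | _ I ihI =>
      intro Q
      induction Q using Nat.strong_induction_on with
      | _ Q ihQ =>
        intro P0
        induction P0 using Nat.strong_induction_on with
        | _ P0 ihP =>
          have hh : ∀ I' Q' P', (I' < I ∨ (I' = I ∧ (Q' < Q ∨ (Q' = Q ∧ P' < P0)))) →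
              G (I', Q', P') ∧ Nat.card {b // i b = I' ∧ q' b = Q' ∧ p' b = P'} =
                Nat.card {b // i b = I' ∧ q b = Q' ∧ p b = P'} := by
            rintro I' Q' P' (h | ⟨rfl, h | ⟨rfl, h⟩⟩)
            · exact ihI I' h Q' P'
            · exact ihQ Q' h P'
            · exact ihP P' h
          exact key I Q P0 (fun a b d h => (hh a b d h).1) (fun a b d h => (hh a b d h).2)
  refine ⟨fun b b' h1 h2 => (all _ _ _).1.1 b b' h1 h2 (Or.inl rfl),
    fun b b' h1 h2 => (all _ _ _).1.2 b b' h1 h2 (Or.inl rfl)⟩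

end Core

/-! ### Part 2: the leading monomial of `pairPoly` -/

theorem perm_eq_of_agree {B V : Type*} [Fintype B] (A R : Equiv.Perm B) (c l : B → ℤ)
    (val : B → V) (hA : ∀ b, c (A b) = c b) (hR : ∀ b, l (R b) = l b)
    (hval : ∀ b, val (A b) = val (R b))
    (he : ∀ b b', val b = val b' → c b - l b = c b' - l b')
    (hinj : ∀ b b', val b = val b' → c b = c b' → b = b') : A = R := by
  have h1 : ∑ b, (c b - l b) * (c (A b) - l (A b)) = ∑ b, (c b - l b) * (c b - l b) := by
    have e1 : ∀ b, (c b - l b) * (c (A b) - l (A b)) =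
        c (A b) * (c (A b) - l (A b)) - l (R b) * (c (R b) - l (R b)) := by
      intro b
      have := he _ _ (hval b)
      rw [hA, hR] at *
      rw [← this]; ring
    rw [Finset.sum_congr rfl (fun b _ => e1 b), Finset.sum_sub_distrib,
      Equiv.sum_comp A (fun b => c b * (c b - l b)),
      Equiv.sum_comp R (fun b => l b * (c b - l b)), ← Finset.sum_sub_distrib]
    exact Finset.sum_congr rfl (fun b _ => by ring)
  have h2 : ∑ b, (c (A b) - l (A b)) * (c (A b) - l (A b)) =
      ∑ b, (c b - l b) * (c b - l b) :=
    Equiv.sum_comp A (fun b => (c b - l b) * (c b - l b))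
  have h3 : ∑ b, ((c b - l b) - (c (A b) - l (A b))) ^ 2 = 0 := by
    have : ∀ b, ((c b - l b) - (c (A b) - l (A b))) ^ 2 =
      (c b - l b) * (c b - l b) + (c (A b) - l (A b)) * (c (A b) - l (A b))
        - 2 * ((c b - l b) * (c (A b) - l (A b))) := fun b => by ring
    rw [Finset.sum_congr rfl (fun b _ => this b), Finset.sum_sub_distrib,
      Finset.sum_add_distrib, ← Finset.mul_sum, h1, h2]
    ring
  have h4 := (Finset.sum_eq_zero_iff_of_nonneg (fun b _ => sq_nonneg _)).1 h3
  ext b : 1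
  have h5 : (c b - l b) - (c (A b) - l (A b)) = 0 := by
    simpa using h4 b (Finset.mem_univ b)
  apply hinj _ _ (hval b)
  have h6 := he _ _ (hval b)
  rw [hR] at h6
  have h7 := hA b
  linarith

section LM

variable {K r0 r1 cm cp : ℕ}

theorem LinkedPair.Tm_eq (L : LinkedPair K r0 r1 cm cp) (b : Fin r0 × Fin cm) :
    L.Tm b.1 b.2 = ((L.Tm b.1 b.2).1, (L.link b).1) := by
  have := L.link_row b.1 b.2
  exact Prod.ext rfl this.symm

theorem LinkedPair.Tp_eq (L : LinkedPair K r0 r1 cm cp) (b : Fin r0 × Fin cm) :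
    L.Tp (L.link b).1 (L.link b).2 = ((L.Tm b.1 b.2).1, b.1) :=
  L.link_label b.1 b.2

/-- The exponent vector of a term of `pairPoly`. -/
noncomputable def monA (L : LinkedPair K r0 r1 cm cp) (αm : Fin cm → Equiv.Perm (Fin r0))
    (αp : Fin cp → Equiv.Perm (Fin r1)) : KVar K r0 r1 →₀ ℕ :=
  ∑ b : Fin r0 × Fin cm, Finsupp.single
    ((L.Tm b.1 b.2).1, αp (L.link b).2 (L.link b).1, αm b.2 b.1) 1

theorem monA_one (L : LinkedPair K r0 r1 cm cp) : monA L 1 1 = monExpP L := by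
  unfold monA monExpP
  rw [← Fintype.sum_prod_type', ← Equiv.sum_comp L.link]
  refine Finset.sum_congr rfl fun b _ => ?_
  rw [L.Tp_eq b]
  rfl

theorem sum_single_apply {B V : Type*} [Fintype B] [DecidableEq V] (F : B → V) (v : V) :
    (∑ b : B, Finsupp.single (F b) (1 : ℕ)) v = Nat.card {b // F b = v} := by
  classical
  rw [Finsupp.finsetSum_apply, Nat.card_eq_fintype_card, Fintype.card_subtype,
    Finset.card_filter]
  exact Finset.sum_congr rfl fun b _ => by rw [Finsupp.single_apply]

theorem pairPoly_eq (L : LinkedPair K r0 r1 cm cp) :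
    pairPoly L = ∑ αm : Fin cm → Equiv.Perm (Fin r0), ∑ αp : Fin cp → Equiv.Perm (Fin r1),
    MvPolynomial.monomial (monA L αm αp)
      ((((∏ l, (Equiv.Perm.sign (αm l) : ℤ)) * ∏ c, (Equiv.Perm.sign (αp c) : ℤ) : ℤ)) : ℂ) := by
  unfold pairPoly
  refine Finset.sum_congr rfl fun αm _ => Finset.sum_congr rfl fun αp _ => ?_
  rw [← Fintype.prod_prod_type' (f := fun p l => (MvPolynomial.X
          ((L.Tm p l).1, αp (L.link (p, l)).2 (L.link (p, l)).1, αm l p) : KPoly K r0 r1))]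
  have : ∀ v : KVar K r0 r1, (MvPolynomial.X v : KPoly K r0 r1) =
    MvPolynomial.monomial (Finsupp.single v 1) 1 := fun v => rfl
  simp only [this]
  rw [← MvPolynomial.monomial_sum_one]
  rw [zsmul_eq_mul, ← map_intCast (MvPolynomial.C (R := ℂ)), MvPolynomial.C_mul_monomial, mul_one]
  rfl

theorem offset_const (L : LinkedPair K r0 r1 cm cp) (hL : IsSemiStandardPair L)
    (b b' : Fin r0 × Fin cm) (h1 : b.1 = b'.1) (h2 : L.Tm b.1 b.2 = L.Tm b'.1 b'.2) :
    (((L.link b).2 : ℕ) : ℤ) - ((b.2 : ℕ) : ℤ) = (((L.link b').2 : ℕ) : ℤ) - ((b'.2 : ℕ) : ℤ) := by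
  obtain ⟨⟨hm1, hm2⟩, ⟨hp1, hp2⟩, hl⟩ := hL
  -- moving right by `n` boxes moves the link right by at least `n`
  have F : ∀ (n : ℕ) (p : Fin r0) (x y : Fin cm), (y : ℕ) = x + n → L.Tm p x = L.Tm p y →
      ((L.link (p, x)).2 : ℕ) + n ≤ (L.link (p, y)).2 := by
    intro n
    induction n with
    | zero =>
      intro p x y h _
      have : x = y := Fin.ext (by omega)
      subst this; simp
    | succ n ih =>
      intro p x y h hT
      let z : Fin cm := ⟨x + n, by omega⟩
      have hxz := hm1 p x z (by rw [Fin.le_def]; simp [z])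
      have hzy := hm1 p z y (by rw [Fin.le_def]; simp [z]; omega)
      have hz : L.Tm p x = L.Tm p z := by
        rw [← hT] at hzy
        simp only [LabelLE, Fin.lt_def, Fin.le_def, Fin.ext_iff] at hxz hzy
        apply Prod.ext <;> apply Fin.ext <;> omega
      have h1 := ih p x z rfl hz
      have h2 := hl p z y (by rw [← hz, hT]) (by rw [Fin.lt_def]; simp [z]; omega)
      rw [Fin.lt_def] at h2
      omega
  -- the same for the inverse
  have hl' : ∀ (b b' : Fin r0 × Fin cm), b.1 = b'.1 → L.Tm b.1 b.2 = L.Tm b'.1 b'.2 →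
      (L.link b).2 < (L.link b').2 → b.2 < b'.2 := by
    rintro ⟨p, x⟩ ⟨p', y⟩ h1 h2 h3
    simp only at h1 h2 h3 ⊢
    subst h1
    rcases lt_trichotomy x y with h | h | h
    · exact h
    · subst h; exact absurd h3 (lt_irrefl _)
    · exact absurd h3 (not_lt.2 (hl p y x h2.symm h).le)
  have G : ∀ (n : ℕ) (q : Fin r1) (x y : Fin cp), (y : ℕ) = x + n → L.Tp q x = L.Tp q y →
      ((L.link.symm (q, x)).2 : ℕ) + n ≤ (L.link.symm (q, y)).2 := by
    intro n
    induction n with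
    | zero =>
      intro p x y h _
      have : x = y := Fin.ext (by omega)
      subst this; simp
    | succ n ih =>
      intro q x y h hT
      let z : Fin cp := ⟨x + n, by omega⟩
      have hxz := hp1 q x z (by rw [Fin.le_def]; simp [z])
      have hzy := hp1 q z y (by rw [Fin.le_def]; simp [z]; omega)
      have hz : L.Tp q x = L.Tp q z := by
        rw [← hT] at hzy
        simp only [LabelLE, Fin.lt_def, Fin.le_def, Fin.ext_iff] at hxz hzy
        apply Prod.ext <;> apply Fin.ext <;> omega
      have h1 := ih q x z rfl hz
      have hz' : L.Tp q z = L.Tp q y := by rw [← hz, hT]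
      have e1 := L.Tp_eq (L.link.symm (q, z))
      have e2 := L.Tp_eq (L.link.symm (q, y))
      have e3 := L.Tm_eq (L.link.symm (q, z))
      have e4 := L.Tm_eq (L.link.symm (q, y))
      simp only [Equiv.apply_symm_apply] at e1 e2 e3 e4
      rw [e1, e2, Prod.mk.injEq] at hz'
      have h2 := hl' (L.link.symm (q, z)) (L.link.symm (q, y)) hz'.2
        (by rw [e3, e4, hz'.1]) (by simp [Fin.lt_def, z]; omega)
      rw [Fin.lt_def] at h2
      omega
  have main : ∀ (b b' : Fin r0 × Fin cm), b.1 = b'.1 → L.Tm b.1 b.2 = L.Tm b'.1 b'.2 →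
      b.2 ≤ b'.2 →
      (((L.link b).2 : ℕ) : ℤ) - ((b.2 : ℕ) : ℤ) =
        (((L.link b').2 : ℕ) : ℤ) - ((b'.2 : ℕ) : ℤ) := by
    rintro b b' h1 h2 h3
    rw [Fin.le_def] at h3
    have f1 := F (b'.2 - b.2) b.1 b.2 b'.2 (by omega) (by rw [h2, h1])
    have e : L.link (b.1, b'.2) = L.link b' := by rw [h1]
    rw [e] at f1
    change ((L.link b).2 : ℕ) + _ ≤ _ at f1
    have rowEq : (L.link b).1 = (L.link b').1 := by
      have := L.Tm_eq b
      rw [h2, L.Tm_eq b'] at this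
      exact (Prod.mk.inj this).2.symm
    have g1 := G ((L.link b').2 - (L.link b).2) (L.link b).1 (L.link b).2 (L.link b').2
      (by omega) (by
        rw [L.Tp_eq b, rowEq, L.Tp_eq b', h2, h1])
    have e' : L.link.symm ((L.link b).1, (L.link b').2) = b' := by
      rw [rowEq]; exact L.link.symm_apply_apply b'
    have e'' : L.link.symm ((L.link b).1, (L.link b).2) = b := L.link.symm_apply_apply b
    rw [e', e''] at g1
    omega
  rcases le_total b.2 b'.2 with h | h
  · exact main b b' h1 h2 h
  · exact (main b' b h1.symm h2.symm h).symm

theorem monA_key (L : LinkedPair K r0 r1 cm cp) (hL : IsSemiStandardPair L)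
    (αm : Fin cm → Equiv.Perm (Fin r0)) (αp : Fin cp → Equiv.Perm (Fin r1))
    (h : ¬ MonLT (monA L αm αp) (monExpP L)) :
    monA L αm αp = monExpP L ∧
      (∏ l, (Equiv.Perm.sign (αm l) : ℤ)) * ∏ c, (Equiv.Perm.sign (αp c) : ℤ) = 1 := by
  classical
  have hLc := hL
  obtain ⟨⟨hm1, hm2⟩, ⟨hp1, hp2⟩, hl⟩ := hLc
  let i : Fin r0 × Fin cm → ℕ := fun b => (L.Tm b.1 b.2).1
  let q : Fin r0 × Fin cm → ℕ := fun b => (L.link b).1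
  let p : Fin r0 × Fin cm → ℕ := fun b => b.1
  let c : Fin r0 × Fin cm → ℕ := fun b => (L.link b).2
  let l : Fin r0 × Fin cm → ℕ := fun b => b.2
  let q' : Fin r0 × Fin cm → ℕ := fun b => αp (L.link b).2 (L.link b).1
  let p' : Fin r0 × Fin cm → ℕ := fun b => αm b.2 b.1
  have S : Side r1 i q p c q' := by
    refine ⟨fun b => Fin.is_lt _, fun b => Fin.is_lt _, ?_, ?_, ?_, ?_, ?_⟩
    · intro b t ht
      exact ⟨L.link.symm (⟨t, ht⟩, (L.link b).2), by simp [c], by simp [q]⟩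
    · intro b t ht
      exact ⟨L.link.symm ((αp (L.link b).2).symm ⟨t, ht⟩, (L.link b).2), by simp [c],
        by simp [q']⟩
    · intro b b' h1 h2
      exact L.link.injective (Prod.ext (Fin.ext h2) (Fin.ext h1))
    · intro b b' h1 h2
      have h1' : (L.link b).2 = (L.link b').2 := Fin.ext h1
      have h2' : αp (L.link b).2 (L.link b).1 = αp (L.link b').2 (L.link b').1 := Fin.ext h2
      rw [h1'] at h2'
      exact L.link.injective (Prod.ext ((αp _).injective h2') h1')
    · intro b b' h1 h2
      have h1' : (L.link b).2 = (L.link b').2 := Fin.ext h1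
      have this : LabelLT (L.Tp (L.link b).1 (L.link b).2) (L.Tp (L.link b').1 (L.link b').2) := by
        rw [h1']; exact hp2 _ _ _ h2
      rw [L.Tp_eq b, L.Tp_eq b'] at this
      rcases this with h | ⟨h, h'⟩
      · exact Or.inl h
      · exact Or.inr ⟨congrArg Fin.val h, h'⟩
  have R : Side r0 i p q l p' := by
    refine ⟨fun b => Fin.is_lt _, fun b => Fin.is_lt _, ?_, ?_, ?_, ?_, ?_⟩
    · intro b t ht
      exact ⟨(⟨t, ht⟩, b.2), by simp [l], by simp [p]⟩
    · intro b t ht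
      exact ⟨((αm b.2).symm ⟨t, ht⟩, b.2), by simp [l], by simp [p']⟩
    · intro b b' h1 h2
      exact Prod.ext (Fin.ext h2) (Fin.ext h1)
    · intro b b' h1 h2
      have h1' : b.2 = b'.2 := Fin.ext h1
      have h2' : αm b.2 b.1 = αm b'.2 b'.1 := Fin.ext h2
      rw [h1'] at h2'
      exact Prod.ext ((αm _).injective h2') h1'
    · intro b b' h1 h2
      have h1' : b.2 = b'.2 := Fin.ext h1
      have this : LabelLT (L.Tm b.1 b.2) (L.Tm b'.1 b'.2) := by
        rw [h1']; exact hm2 _ _ _ h2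
      have e1 := L.link_row b.1 b.2
      have e2 := L.link_row b'.1 b'.2
      rcases this with h | ⟨h, h'⟩
      · exact Or.inl h
      · refine Or.inr ⟨congrArg Fin.val h, ?_⟩
        rw [← e1, ← e2] at h'
        exact h'
  have cA : ∀ v : KVar K r0 r1, monA L αm αp v =
      Nat.card {b // i b = v.1 ∧ q' b = v.2.1 ∧ p' b = v.2.2} := by
    intro v
    unfold monA
    rw [sum_single_apply]
    refine Nat.card_congr (Equiv.subtypeEquivRight fun b => ?_)
    simp [Prod.ext_iff, Fin.ext_iff, i, q', p']
  have c1 : ∀ v : KVar K r0 r1, monExpP L v =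
      Nat.card {b // i b = v.1 ∧ q b = v.2.1 ∧ p b = v.2.2} := by
    intro v
    rw [← monA_one]
    unfold monA
    rw [sum_single_apply]
    refine Nat.card_congr (Equiv.subtypeEquivRight fun b => ?_)
    simp [Prod.ext_iff, Fin.ext_iff, i, q, p]
  obtain ⟨ag1, ag2⟩ := core_agree S R (by
    intro I Q P0 hlt
    by_cases hv : I < K ∧ Q < r1 ∧ P0 < r0
    · obtain ⟨hI, hQ, hP⟩ := hv
      let v : KVar K r0 r1 := (⟨I, hI⟩, ⟨Q, hQ⟩, ⟨P0, hP⟩)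
      by_contra hcon
      push Not at hcon
      apply h
      refine ⟨v, ?_, ?_⟩
      · rw [cA, c1]; exact hcon
      · intro w hw
        rw [cA, c1]
        apply hlt
        simpa [VarGT, v, Fin.lt_def, Fin.ext_iff] using hw
    · have : IsEmpty {b // i b = I ∧ q b = Q ∧ p b = P0} := by
        constructor
        rintro ⟨b, rfl, rfl, rfl⟩
        exact hv ⟨Fin.is_lt _, Fin.is_lt _, Fin.is_lt _⟩
      simp)
  -- the two box permutations
  let A : Equiv.Perm (Fin r0 × Fin cm) :=
    (L.link.trans (Equiv.prodCongrLeft αp)).trans L.link.symm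
  let Rr : Equiv.Perm (Fin r0 × Fin cm) := Equiv.prodCongrLeft αm
  have linkA : ∀ b, L.link (A b) = (αp (L.link b).2 (L.link b).1, (L.link b).2) := by
    intro b
    simp [A, Equiv.prodCongrLeft]
  have Rb : ∀ b, Rr b = (αm b.2 b.1, b.2) := fun b => rfl
  let val : Fin r0 × Fin cm → ℕ × ℕ × ℕ := fun b => (i b, q b, p b)
  have vA : ∀ b, val (A b) = (i b, q' b, p' b) := by
    intro b
    have hq : q (A b) = q' b := by simp only [q, q', linkA]
    have := ag1 (A b) b (by simp only [c, linkA]) hq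
    simp only [val, this.1, this.2, hq]
  have vR : ∀ b, val (Rr b) = (i b, q' b, p' b) := by
    intro b
    have hp : p (Rr b) = p' b := by simp only [p, p', Rb]
    have := ag2 (Rr b) b (by simp only [l, Rb]) hp
    simp only [val, this.1, this.2, hp]
  have hAR : A = Rr := by
    refine perm_eq_of_agree A Rr (fun b => (c b : ℤ)) (fun b => (l b : ℤ)) val ?_ ?_ ?_ ?_ ?_
    · intro b; simp only [c, linkA]
    · intro b; simp only [l, Rb]
    · intro b; rw [vA, vR]
    · intro b b' hv
      simp only [val, Prod.mk.injEq] at hv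
      refine offset_const L hL b b' (Fin.ext hv.2.2) ?_
      rw [L.Tm_eq b, L.Tm_eq b']
      exact Prod.ext (Fin.ext hv.1) (Fin.ext hv.2.1)
    · intro b b' hv hc
      simp only [val, Prod.mk.injEq] at hv
      exact S.inj b b' (by simpa using hc) hv.2.1
  constructor
  · rw [← monA_one]
    unfold monA
    rw [← Equiv.sum_comp A]
    conv_rhs => rw [← Equiv.sum_comp A]
    rw [Equiv.sum_comp A (fun b : Fin r0 × Fin cm => Finsupp.single
      (((L.Tm b.1 b.2).1, αp (L.link b).2 (L.link b).1, αm b.2 b.1) : KVar K r0 r1) 1)]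
    refine Finset.sum_congr rfl fun b _ => ?_
    have := vA b
    simp only [val, Prod.mk.injEq] at this
    congr 1
    refine Prod.ext (Fin.ext this.1.symm) (Prod.ext (Fin.ext this.2.1.symm)
      (Fin.ext this.2.2.symm))
  · have s1 : Equiv.Perm.sign A = ∏ c, Equiv.Perm.sign (αp c) := by
      rw [← Equiv.Perm.sign_prodCongrLeft]
      have := Equiv.Perm.sign_symm_trans_trans (Equiv.prodCongrLeft αp) L.link.symm
      rw [← this]
      rfl
    have s2 : Equiv.Perm.sign Rr = ∏ c, Equiv.Perm.sign (αm c) :=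
      Equiv.Perm.sign_prodCongrLeft _
    have : (∏ l, (Equiv.Perm.sign (αm l))) * ∏ c, (Equiv.Perm.sign (αp c)) = 1 := by
      rw [← s1, ← s2, hAR]
      exact Int.units_mul_self _
    have := congrArg (fun u : ℤˣ => (u : ℤ)) this
    simpa using this

theorem pairPoly_coeff_le (L : LinkedPair K r0 r1 cm cp) (hL : IsSemiStandardPair L)
    (m : KVar K r0 r1 →₀ ℕ) (hm : (pairPoly L).coeff m ≠ 0) :
    m = monExpP L ∨ MonLT m (monExpP L) := by
  classical
  rw [pairPoly_eq] at hm
  simp only [MvPolynomial.coeff_sum, MvPolynomial.coeff_monomial] at hm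
  obtain ⟨αm, -, h1⟩ := Finset.exists_ne_zero_of_sum_ne_zero hm
  obtain ⟨αp, -, h2⟩ := Finset.exists_ne_zero_of_sum_ne_zero h1
  have h3 : monA L αm αp = m := by
    by_contra h; simp [h] at h2
  by_cases h4 : MonLT m (monExpP L)
  · exact Or.inr h4
  · rw [← h3] at h4 ⊢
    exact Or.inl (monA_key L hL αm αp h4).1

theorem not_monLT_self (m : KVar K r0 r1 →₀ ℕ) : ¬ MonLT m m := by
  rintro ⟨v, h, -⟩
  exact lt_irrefl _ h

theorem pairPoly_coeff_ne (L : LinkedPair K r0 r1 cm cp) (hL : IsSemiStandardPair L) :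
    (pairPoly L).coeff (monExpP L) ≠ 0 := by
  classical
  rw [pairPoly_eq]
  simp only [MvPolynomial.coeff_sum, MvPolynomial.coeff_monomial]
  have : ∀ (αm : Fin cm → Equiv.Perm (Fin r0)) (αp : Fin cp → Equiv.Perm (Fin r1)),
      (if monA L αm αp = monExpP L then
      ((((∏ l, (Equiv.Perm.sign (αm l) : ℤ)) * ∏ c, (Equiv.Perm.sign (αp c) : ℤ) : ℤ)) : ℂ)
      else 0) = ((if monA L αm αp = monExpP L then 1 else 0 : ℕ) : ℂ) := by
    intro αm αp
    split_ifs with h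
    · have := (monA_key L hL αm αp (by rw [h]; exact not_monLT_self _)).2
      rw [this]; simp
    · simp
  simp only [this]
  have h2 : (∑ αm : Fin cm → Equiv.Perm (Fin r0), ∑ αp : Fin cp → Equiv.Perm (Fin r1),
      ((if monA L αm αp = monExpP L then 1 else 0 : ℕ) : ℂ)) =
      ((∑ αm : Fin cm → Equiv.Perm (Fin r0), ∑ αp : Fin cp → Equiv.Perm (Fin r1),
      (if monA L αm αp = monExpP L then 1 else 0 : ℕ) : ℕ) : ℂ) := by
    rw [Nat.cast_sum]
    exact Finset.sum_congr rfl fun _ _ => by rw [Nat.cast_sum]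
  rw [h2, Nat.cast_ne_zero, ← Nat.pos_iff_ne_zero]
  refine Finset.sum_pos' (fun _ _ => Nat.zero_le _) ⟨1, Finset.mem_univ _, ?_⟩
  refine Finset.sum_pos' (fun _ _ => Nat.zero_le _) ⟨1, Finset.mem_univ _, ?_⟩
  rw [if_pos (monA_one L)]
  exact one_pos

end LM

/-! ### Part 3: `pairPoly` is a semi-invariant -/

section SemiInv

/-- A signed sum over tuples of permutations. -/
noncomputable def dsum {n c : ℕ} (N : Matrix (Fin n) (Fin n) ℂ) (J : Fin n × Fin c → Fin n) : ℂ :=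
  ∑ α : Fin c → Equiv.Perm (Fin n), (∏ l, ((Equiv.Perm.sign (α l) : ℤ) : ℂ)) *
    ∏ b : Fin n × Fin c, N (α b.2 b.1) (J b)

theorem dsum_det {n c : ℕ} (N : Matrix (Fin n) (Fin n) ℂ) (J : Fin n × Fin c → Fin n) :
    dsum N J = ∏ l, (N.submatrix id (fun q => J (q, l))).det := by
  unfold dsum
  simp only [Matrix.det_apply']
  rw [Finset.prod_univ_sum, Fintype.piFinset_univ]
  refine Finset.sum_congr rfl fun α _ => ?_
  rw [Finset.prod_mul_distrib, Fintype.prod_prod_type_right]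
  rfl

theorem dsum_eq {n c : ℕ} (N : Matrix (Fin n) (Fin n) ℂ) (J : Fin n × Fin c → Fin n) :
    dsum N J = N.det ^ c * dsum 1 J := by
  rw [dsum_det, dsum_det]
  have : ∀ l, (N.submatrix id (fun q => J (q, l))).det =
      N.det * ((1 : Matrix (Fin n) (Fin n) ℂ).submatrix id (fun q => J (q, l))).det := by
    intro l
    rw [← Matrix.det_mul]
    congr 1
    ext a b
    simp [Matrix.mul_apply, Matrix.one_apply]
  simp only [this, Finset.prod_mul_distrib, Finset.prod_const, Finset.card_univ, Fintype.card_fin]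

variable {K r0 r1 cm cp : ℕ}

theorem glAct_pairPoly (L : LinkedPair K r0 r1 cm cp) (g : Matrix (Fin r0) (Fin r0) ℂ)
    (h : Matrix (Fin r1) (Fin r1) ℂ) :
    glAct g h (pairPoly L) =
      ∑ F : Fin r0 × Fin cm → Fin r1 × Fin r0,
        MvPolynomial.C (dsum g.transpose (fun b => (F b).2) *
          dsum h⁻¹ (fun b => (F (L.link.symm b)).1)) *
          ∏ b, MvPolynomial.X ((L.Tm b.1 b.2).1, F b) := by
  have e : ∀ (αm : Fin cm → Equiv.Perm (Fin r0)) (αp : Fin cp → Equiv.Perm (Fin r1)),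
      glAct (K := K) g h (((∏ l, (Equiv.Perm.sign (αm l) : ℤ)) * ∏ c, (Equiv.Perm.sign (αp c) : ℤ)) •
      ∏ p : Fin r0, ∏ l : Fin cm,
        MvPolynomial.X
          ((L.Tm p l).1, αp (L.link (p, l)).2 (L.link (p, l)).1, αm l p)) =
      ∑ F : Fin r0 × Fin cm → Fin r1 × Fin r0,
        MvPolynomial.C (((∏ l, ((Equiv.Perm.sign (αm l) : ℤ) : ℂ)) *
            ∏ b : Fin r0 × Fin cm, g.transpose (αm b.2 b.1) (F b).2) *
          ((∏ l, ((Equiv.Perm.sign (αp l) : ℤ) : ℂ)) *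
            ∏ b : Fin r1 × Fin cp, h⁻¹ (αp b.2 b.1) (F (L.link.symm b)).1)) *
          ∏ b, MvPolynomial.X ((L.Tm b.1 b.2).1, F b) := by
    intro αm αp
    rw [← Fintype.prod_prod_type' (f := fun p l => (MvPolynomial.X
          ((L.Tm p l).1, αp (L.link (p, l)).2 (L.link (p, l)).1, αm l p) : KPoly K r0 r1))]
    rw [map_zsmul, map_prod]
    have : ∀ v : KVar K r0 r1, glAct g h (MvPolynomial.X v) =
      ∑ jk : Fin r1 × Fin r0, MvPolynomial.C (h⁻¹ v.2.1 jk.1 * g jk.2 v.2.2) *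
        MvPolynomial.X (v.1, jk) := by
      intro v
      rw [glAct, MvPolynomial.aeval_X, Fintype.sum_prod_type]
    simp only [this]
    rw [Finset.prod_univ_sum, Fintype.piFinset_univ, zsmul_eq_mul, Finset.mul_sum]
    refine Finset.sum_congr rfl fun F _ => ?_
    rw [Finset.prod_mul_distrib, ← map_prod, Finset.prod_mul_distrib,
      ← map_intCast (MvPolynomial.C (R := ℂ)), ← mul_assoc, ← MvPolynomial.C_mul,
      ← Equiv.prod_comp L.link (fun b => h⁻¹ (αp b.2 b.1) (F (L.link.symm b)).1)]
    simp only [Equiv.symm_apply_apply]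
    congr 2
    push_cast
    simp only [Matrix.transpose_apply]
    ring
  unfold pairPoly
  rw [map_sum]
  simp only [map_sum, e]
  have : ∀ αm : Fin cm → Equiv.Perm (Fin r0), ∀ G : (Fin cp → Equiv.Perm (Fin r1)) →
    (Fin r0 × Fin cm → Fin r1 × Fin r0) → KPoly K r0 r1, ∑ a, ∑ b, G a b = ∑ b, ∑ a, G a b :=
      fun _ _ => Finset.sum_comm
  rw [Finset.sum_congr rfl fun αm _ => this αm _, Finset.sum_comm]
  refine Finset.sum_congr rfl fun F _ => ?_
  unfold dsum
  rw [Finset.sum_mul_sum]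
  simp only [map_sum, Finset.sum_mul]

theorem glAct_one (f : KPoly K r0 r1) : glAct 1 1 f = f := by
  have : (glAct 1 1 : KPoly K r0 r1 →ₐ[ℂ] KPoly K r0 r1) = AlgHom.id ℂ _ := by
    apply MvPolynomial.algHom_ext
    intro v
    rw [glAct, MvPolynomial.aeval_X]
    rw [Finset.sum_eq_single v.2.1, Finset.sum_eq_single v.2.2]
    · simp
    · intro b _ hb; simp [Matrix.one_apply_ne hb]
    · simp
    · intro b _ hb; simp [Matrix.one_apply_ne hb.symm]
    · simp
  rw [this]; rfl

theorem pairPoly_semiInv (L : LinkedPair K r0 r1 cm cp) :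
    IsSemiInvariant (pairPoly L) (cm : ℤ) (-(cp : ℤ)) := by
  intro g h _ _
  have e1 := glAct_pairPoly L g h
  have e2 := glAct_pairPoly L 1 1
  rw [glAct_one] at e2
  rw [e1]
  conv_rhs => rw [e2, Finset.mul_sum]
  refine Finset.sum_congr rfl fun F _ => ?_
  rw [← mul_assoc, ← MvPolynomial.C_mul, dsum_eq g.transpose, dsum_eq h⁻¹, Matrix.det_transpose,
    Matrix.transpose_one, inv_one, Matrix.det_nonsing_inv, zpow_neg, zpow_natCast, zpow_natCast,
    Ring.inverse_eq_inv', inv_pow]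
  congr 2
  ring

end SemiInv

/-! ### Part 4a: the two-line lemma -/

section TwoLine

theorem sep_monomials {ι W : Type*} [DecidableEq W] [Fintype W] (S : Finset ι) (u v : ι → ℂ)
    (d : ι → W → ℕ)
    (h : ∀ Z : W → ℂ, ∑ i ∈ S, u i * ∏ w, Z w ^ d i w = ∑ i ∈ S, v i * ∏ w, Z w ^ d i w)
    (d0 : W → ℕ) :
    ∑ i ∈ S.filter (fun i => d i = d0), u i = ∑ i ∈ S.filter (fun i => d i = d0), v i := by
  classical
  let e : (W → ℕ) → (W →₀ ℕ) := fun f => Finsupp.equivFunOnFinite.symm f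
  have key : (∑ i ∈ S, MvPolynomial.monomial (e (d i)) (u i)) =
      ∑ i ∈ S, MvPolynomial.monomial (e (d i)) (v i) := by
    apply MvPolynomial.funext
    intro Z
    have := h Z
    simp only [map_sum, MvPolynomial.eval_monomial]
    have e1 : ∀ i, ((e (d i)).prod fun n k => Z n ^ k) = ∏ w, Z w ^ d i w := by
      intro i
      rw [Finsupp.prod_fintype _ _ (fun _ => pow_zero _)]
      rfl
    simp only [e1]
    exact this
  have := congrArg (MvPolynomial.coeff (e d0)) key
  simp only [MvPolynomial.coeff_sum, MvPolynomial.coeff_monomial] at this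
  have e2 : ∀ i, (e (d i) = e d0) ↔ d i = d0 := fun i =>
    Finsupp.equivFunOnFinite.symm.injective.eq_iff
  simp only [e2] at this
  rw [Finset.sum_filter, Finset.sum_filter]
  exact this

variable {ρ ι : Type*} [Fintype ρ] [LinearOrder ρ]

/-- Invariance of `∑ c_i X^{a_i} Y^{b_i}` under `X_r ↦ X_r + Y_r`, `r ∈ R`. -/
def TInv (S : Finset ι) (c : ι → ℂ) (a b : ι → ρ → ℕ) (R : Finset ρ) : Prop :=
  ∀ X Y : ρ → ℂ, ∑ i ∈ S, c i * ∏ r, ((X r + if r ∈ R then Y r else 0) ^ a i r * Y r ^ b i r) =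
    ∑ i ∈ S, c i * ∏ r, (X r ^ a i r * Y r ^ b i r)

theorem TInv.degen {S : Finset ι} {c : ι → ℂ} {a b : ι → ρ → ℕ} {R : Finset ρ}
    (h : TInv S c a b R) (s : ρ) (β : ℕ) (hβ : ∀ i ∈ S, β ≤ b i s) :
    TInv (S.filter fun i => b i s = β) c a b (R.erase s) := by
  classical
  intro X Y
  let P : ℂ → ℂ := fun η => ∑ i ∈ S, (c i * ∏ r, ((X r + if r ∈ R then
    (if r = s then η else 1) * Y r else 0) ^ a i r * Y r ^ b i r)) * η ^ (b i s - β)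
  let Q : ℂ → ℂ := fun η => ∑ i ∈ S, (c i * ∏ r, (X r ^ a i r * Y r ^ b i r)) * η ^ (b i s - β)
  have hP : Continuous P := by
    refine continuous_finsetSum _ fun i _ => ?_
    refine (continuous_const.mul (continuous_finsetProd _ fun r _ => ?_)).mul (by fun_prop)
    refine Continuous.mul (Continuous.pow (continuous_const.add ?_) _) continuous_const
    split_ifs <;> fun_prop
  have hQ : Continuous Q := by
    refine continuous_finsetSum _ fun i _ => ?_
    fun_prop
  have hPQ : P = Q := by
    refine Continuous.ext_on (s := {0}ᶜ) (dense_compl_singleton 0) hP hQ ?_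
    intro η hη
    have hη' : η ≠ 0 := hη
    have := h X (fun r => (if r = s then η else 1) * Y r)
    have e : ∀ i, ∏ r, ((if r = s then η else 1) * Y r) ^ b i r =
        η ^ b i s * ∏ r, Y r ^ b i r := by
      intro i
      simp only [mul_pow, Finset.prod_mul_distrib]
      congr 1
      rw [Finset.prod_eq_single s]
      · simp
      · intro r _ hr; simp [hr]
      · simp
    simp only [Finset.prod_mul_distrib, e] at this
    apply mul_left_cancel₀ (pow_ne_zero β hη')
    simp only [P, Q, Finset.mul_sum]
    convert this using 1
    · refine Finset.sum_congr rfl fun i hi => ?_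
      rw [Finset.prod_mul_distrib]
      have := hβ i hi
      obtain ⟨k, hk⟩ := Nat.exists_eq_add_of_le this
      rw [hk, Nat.add_sub_cancel_left, pow_add]
      ring
    · refine Finset.sum_congr rfl fun i hi => ?_
      rw [Finset.prod_mul_distrib]
      have := hβ i hi
      obtain ⟨k, hk⟩ := Nat.exists_eq_add_of_le this
      rw [hk, Nat.add_sub_cancel_left, pow_add]
      ring
  have h0 := congrFun hPQ 0
  have e0 : ∀ i ∈ S, (0 : ℂ) ^ (b i s - β) = if b i s = β then 1 else 0 := by
    intro i hi
    have := hβ i hi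
    split_ifs with h
    · simp [h]
    · rw [zero_pow]; omega
  simp only [P, Q] at h0
  rw [Finset.sum_filter, Finset.sum_filter]
  convert h0 using 1
  · refine Finset.sum_congr rfl fun i hi => ?_
    rw [e0 i hi]
    split_ifs with h
    · rw [mul_one]
      congr 1
      refine Finset.prod_congr rfl fun r _ => ?_
      by_cases h1 : r = s <;> by_cases h2 : r ∈ R <;> simp [h1, h2]
    · simp
  · refine Finset.sum_congr rfl fun i hi => ?_
    rw [e0 i hi]
    split_ifs with h <;> simp

theorem TInv.degen_set {S : Finset ι} {c : ι → ℂ} {a b : ι → ρ → ℕ} {n : ρ → ℕ}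
    (hn : ∀ i ∈ S, ∀ r, a i r + b i r = n r) (h : TInv S c a b Finset.univ)
    {m : ι} (hm : m ∈ S)
    (hlex : ∀ i ∈ S, a i = a m ∨ ∃ r, a i r < a m r ∧ ∀ r' < r, a i r' = a m r')
    (A : Finset ρ) : (∀ r ∈ A, ∀ r' < r, r' ∈ A) →
    TInv (S.filter fun i => ∀ r ∈ A, a i r = a m r) c a b Aᶜ := by
  classical
  induction A using Finset.induction_on_max with
  | empty => intro _; simpa using h
  | insert s A hs ih =>
    intro hA
    have hA' : ∀ r ∈ A, ∀ r' < r, r' ∈ A := by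
      intro r hr r' hr'
      have := hA r (Finset.mem_insert_of_mem hr) r' hr'
      rcases Finset.mem_insert.1 this with h | h
      · subst h; exact absurd hr' (not_lt.2 (hs r hr).le)
      · exact h
    have := (ih hA').degen s (b m s) (by
      intro i hi
      rw [Finset.mem_filter] at hi
      have h1 := hn i hi.1 s
      have h2 := hn m hm s
      have : a i s ≤ a m s := by
        rcases hlex i hi.1 with h | ⟨r, hr, hr'⟩
        · rw [h]
        · rcases lt_trichotomy r s with h | h | h
          · have h3 := hA s (Finset.mem_insert_self _ _) r h
            rcases Finset.mem_insert.1 h3 with h4 | h4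
            · exact absurd h4 h.ne
            · exact absurd (hi.2 r h4) hr.ne
          · subst h; exact hr.le
          · exact (hr' s h).le
      omega)
    rw [Finset.filter_filter] at this
    convert this using 1
    · apply Finset.filter_congr
      intro i hi
      have h1 := hn i hi s
      have h2 := hn m hm s
      rw [Finset.forall_mem_insert]
      constructor
      · rintro ⟨h3, h4⟩; exact ⟨h4, by omega⟩
      · rintro ⟨h3, h4⟩; exact ⟨by omega, h3⟩
    · ext r; simp

set_option maxHeartbeats 1000000 in
theorem two_line {S : Finset ι} {c : ι → ℂ} {a b : ι → ρ → ℕ} {n : ρ → ℕ} {T : ℕ}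
    (hn : ∀ i ∈ S, ∀ r, a i r + b i r = n r) (hT : ∀ i ∈ S, ∑ r, a i r = T)
    (hinj : ∀ i ∈ S, ∀ j ∈ S, a i = a j → i = j)
    (h : TInv S c a b Finset.univ)
    {m : ι} (hm : m ∈ S) (hc : c m ≠ 0)
    (hlex : ∀ i ∈ S, a i = a m ∨ ∃ r, a i r < a m r ∧ ∀ r' < r, a i r' = a m r')
    (s : ρ) :
    ∑ r with s ≤ r, a m r ≤ ∑ r with s < r, b m r := by
  classical
  by_contra hcon
  push Not at hcon
  have hinv := h.degen_set hn hm hlex (Finset.univ.filter (· < s)) (by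
    intro r hr r' hr'
    simp only [Finset.mem_filter, Finset.mem_univ, true_and] at hr ⊢
    exact hr'.trans hr)
  set S' := S.filter fun i => ∀ r ∈ Finset.univ.filter (· < s), a i r = a m r with hS'
  have hS : ∀ i ∈ S', i ∈ S ∧ ∀ r < s, a i r = a m r := by
    intro i hi
    rw [hS', Finset.mem_filter] at hi
    exact ⟨hi.1, fun r hr => hi.2 r (by simpa using hr)⟩
  have hmS : m ∈ S' := by
    rw [hS', Finset.mem_filter]; exact ⟨hm, fun _ _ => rfl⟩
  -- splitting of sums
  have split1 : ∀ f : ρ → ℕ, ∑ r, f r = ∑ r with r < s, f r + (f s + ∑ r with s < r, f r) := by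
    intro f
    rw [← Finset.sum_filter_add_sum_filter_not Finset.univ (· < s)]
    congr 1
    rw [← Finset.add_sum_erase _ _ (show s ∈ Finset.univ.filter (fun r => ¬ r < s) by simp)]
    congr 1
    apply Finset.sum_congr _ (fun _ _ => rfl)
    ext r
    simp only [Finset.mem_erase, Finset.mem_filter, Finset.mem_univ, true_and, not_lt]
    rw [lt_iff_le_and_ne]
    tauto
  have split2 : ∑ r with s ≤ r, a m r = a m s + ∑ r with s < r, a m r := by
    rw [← Finset.add_sum_erase _ _ (show s ∈ Finset.univ.filter (fun r => s ≤ r) by simp)]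
    congr 1
    apply Finset.sum_congr _ (fun _ _ => rfl)
    ext r
    simp only [Finset.mem_erase, Finset.mem_filter, Finset.mem_univ, true_and]
    rw [lt_iff_le_and_ne]
    tauto
  have hpre : ∀ i ∈ S', ∑ r with r < s, a i r = ∑ r with r < s, a m r := fun i hi =>
    Finset.sum_congr rfl fun r hr => (hS i hi).2 r (by simpa using hr)
  have hpreb : ∀ i ∈ S', ∑ r with r < s, b i r = ∑ r with r < s, b m r := fun i hi =>
    Finset.sum_congr rfl fun r hr => by
      have h1 := (hS i hi).2 r (by simpa using hr)
      have h2 := hn i (hS i hi).1 r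
      have h3 := hn m hm r
      omega
  have hab : ∀ i ∈ S, ∑ r, a i r + ∑ r, b i r = ∑ r, n r := by
    intro i hi
    rw [← Finset.sum_add_distrib]
    exact Finset.sum_congr rfl fun r _ => hn i hi r
  have hNa : ∀ i ∈ S', a i s + ∑ r with s < r, a i r = a m s + ∑ r with s < r, a m r := by
    intro i hi
    have h1 := hT i (hS i hi).1
    have h2 := hT m hm
    rw [split1] at h1 h2
    have := hpre i hi
    omega
  have hNb : ∀ i ∈ S', b i s + ∑ r with s < r, b i r = b m s + ∑ r with s < r, b m r := by
    intro i hi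
    have h1 := hab i (hS i hi).1
    have h2 := hab m hm
    rw [hT i (hS i hi).1, split1 (b i)] at h1
    rw [hT m hm, split1 (b m)] at h2
    have := hpreb i hi
    omega
  have has : ∀ i ∈ S', a i s ≤ a m s := by
    intro i hi
    rcases hlex i (hS i hi).1 with h | ⟨r, hr, hr'⟩
    · rw [h]
    · rcases lt_trichotomy r s with h | h | h
      · exact absurd ((hS i hi).2 r h) hr.ne
      · subst h; exact hr.le
      · exact (hr' s h).le
  -- the polynomial identity in `ε`
  have key : ∀ X Y : ρ → ℂ, ∑ i ∈ S', c i * ∏ r, ((if r < s then 1 else if r = s then -1 else X r)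
      ^ a i r * (if r < s then 1 else if r = s then 1 else Y r - X r) ^ b i r) = 0 := by
    intro X Y
    let U : ρ → Polynomial ℂ := fun r => if r < s then 1 else if r = s then -1 else
      Polynomial.C (X r) * Polynomial.X
    let V : ρ → Polynomial ℂ := fun r => if r < s then 1 else if r = s then 1 else
      Polynomial.C (Y r) - Polynomial.C (X r) * Polynomial.X
    let U' : ρ → Polynomial ℂ := fun r => if r < s then 1 else if r = s then 0 else
      Polynomial.C (Y r)
    let P : Polynomial ℂ := ∑ i ∈ S', Polynomial.C (c i) * ∏ r, (U r ^ a i r * V r ^ b i r)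
    let Q : Polynomial ℂ := ∑ i ∈ S', Polynomial.C (c i) * ∏ r, (U' r ^ a i r * V r ^ b i r)
    have hPQ : P = Q := by
      apply Polynomial.funext
      intro ε
      have := hinv (fun r => (U r).eval ε) (fun r => (V r).eval ε)
      simp only [P, Q, Polynomial.eval_finsetSum, Polynomial.eval_mul, Polynomial.eval_C,
        Polynomial.eval_prod, Polynomial.eval_pow]
      rw [← this]
      refine Finset.sum_congr rfl fun i _ => ?_
      congr 1
      refine Finset.prod_congr rfl fun r _ => ?_
      congr 2
      simp only [U, V, U', Finset.mem_compl, Finset.mem_filter, Finset.mem_univ, true_and]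
      by_cases h1 : r < s
      · simp [h1]
      · by_cases h2 : r = s
        · simp [h2]
        · simp [h1, h2]
    have hdvd : ∀ k < ∑ r with s < r, a m r, P.coeff k = 0 := by
      have : (Polynomial.X : Polynomial ℂ) ^ (∑ r with s < r, a m r) ∣ P := by
        refine Finset.dvd_sum fun i hi => Dvd.dvd.mul_left ?_ _
        have h1 : (Polynomial.X : Polynomial ℂ) ^ (∑ r with s < r, a i r) ∣
            ∏ r, (U r ^ a i r * V r ^ b i r) := by
          rw [Finset.sum_filter, ← Finset.prod_pow_eq_pow_sum]
          refine Finset.prod_dvd_prod_of_dvd _ _ fun r _ => Dvd.dvd.mul_right ?_ _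
          split_ifs with h
          · apply pow_dvd_pow_of_dvd
            simp only [U, if_neg (not_lt.2 h.le), if_neg h.ne']
            exact Dvd.intro_left _ rfl
          · simp
        refine dvd_trans (pow_dvd_pow _ ?_) h1
        have := hNa i hi
        have := has i hi
        omega
      exact Polynomial.X_pow_dvd_iff.1 this
    have hdeg : ∀ k, ∑ r with s < r, a m r ≤ k → Q.coeff k = 0 := by
      intro k hk
      rw [Polynomial.finsetSum_coeff]
      refine Finset.sum_eq_zero fun i hi => ?_
      rw [Polynomial.coeff_C_mul]
      by_cases h0 : a i s = 0
      · rw [Polynomial.coeff_eq_zero_of_natDegree_lt, mul_zero]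
        refine lt_of_le_of_lt (Polynomial.natDegree_prod_le _ _) ?_
        have h1 : ∑ r, (U' r ^ a i r * V r ^ b i r).natDegree ≤ ∑ r with s < r, b i r := by
          rw [Finset.sum_filter]
          refine Finset.sum_le_sum fun r _ => ?_
          refine Polynomial.natDegree_mul_le.trans ?_
          have hU : (U' r ^ a i r).natDegree = 0 := by
            have : U' r = Polynomial.C (if r < s then 1 else if r = s then 0 else Y r) := by
              simp only [U']; split_ifs <;> simp
            rw [this, ← Polynomial.C_pow, Polynomial.natDegree_C]
          rw [hU, zero_add]
          refine Polynomial.natDegree_pow_le.trans ?_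
          split_ifs with h
          · have : (V r).natDegree ≤ 1 := by
              simp only [V, if_neg (not_lt.2 h.le), if_neg h.ne']
              compute_degree
            calc b i r * (V r).natDegree ≤ b i r * 1 := Nat.mul_le_mul_left _ this
              _ = b i r := mul_one _
          · have : V r = 1 := by
              simp only [V]
              rcases lt_or_eq_of_le (not_lt.1 h) with h | h <;> simp [h]
            rw [this]; simp
        have h2 := hNb i hi
        have h3 := hn i (hS i hi).1 s
        have h4 := hn m hm s
        have h5 := hNa i hi
        omega
      · have : ∏ r, (U' r ^ a i r * V r ^ b i r) = 0 := by
          apply Finset.prod_eq_zero (Finset.mem_univ s)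
          simp [U', h0]
        rw [this]; simp
    have hP0 : P = 0 := by
      ext k
      rw [Polynomial.coeff_zero]
      rcases lt_or_ge k (∑ r with s < r, a m r) with h | h
      · exact hdvd k h
      · rw [hPQ]; exact hdeg k h
    have := congrArg (Polynomial.eval 1) hP0
    simp only [P, Polynomial.eval_finsetSum, Polynomial.eval_mul, Polynomial.eval_C,
        Polynomial.eval_prod, Polynomial.eval_pow, Polynomial.eval_zero] at this
    rw [← this]
    refine Finset.sum_congr rfl fun i _ => ?_
    congr 1
    refine Finset.prod_congr rfl fun r _ => ?_
    congr 2
    · simp only [U]; split_ifs <;> simp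
    · simp only [V]; split_ifs <;> simp
  -- extract the coefficient
  let d : ι → ρ → ℕ := fun i r => if s < r then a i r else 0
  have fin := sep_monomials S' (fun i => c i * (-1) ^ a i s) (fun _ => 0) d (by
    intro Z
    have := key Z (fun r => Z r + 1)
    simp only [zero_mul, Finset.sum_const_zero]
    rw [← this]
    refine Finset.sum_congr rfl fun i _ => ?_
    rw [mul_assoc]
    congr 1
    have e1 : ∀ r, ((if r < s then 1 else if r = s then -1 else Z r)
      ^ a i r * (if r < s then 1 else if r = s then 1 else Z r + 1 - Z r) ^ b i r) =
      (if r = s then (-1) ^ a i r else 1) * Z r ^ d i r := by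
      intro r
      rcases lt_trichotomy r s with h | h | h
      · simp [d, h, h.ne, not_lt.2 h.le]
      · simp [d, h]
      · simp [d, h, h.ne', not_lt.2 h.le]
    rw [Finset.prod_congr rfl fun r _ => e1 r, Finset.prod_mul_distrib]
    simp) (d m)
  rw [Finset.sum_const_zero, Finset.sum_eq_single m] at fin
  · have : (-1 : ℂ) ^ a m s ≠ 0 := pow_ne_zero _ (by norm_num)
    exact (mul_ne_zero hc this) fin
  · intro i hi him
    exfalso
    rw [Finset.mem_filter] at hi
    apply him
    apply hinj i (hS i hi.1).1 m hm
    have hgt : ∀ r, s < r → a i r = a m r := by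
      intro r hr
      have := congrFun hi.2 r
      simpa [d, hr] using this
    funext r
    rcases lt_trichotomy r s with h | h | h
    · exact (hS i hi.1).2 r h
    · subst h
      have h1 := hNa i hi.1
      have h2 : ∑ x with r < x, a i x = ∑ x with r < x, a m x :=
        Finset.sum_congr rfl fun x hx => hgt x (by simpa using hx)
      omega
    · exact hgt r h
  · intro h
    have hmem : m ∈ S'.filter (fun i => d i = d m) := Finset.mem_filter.2 ⟨hmS, rfl⟩
    exact absurd hmem h

end TwoLine

/-! ### Part 4b: constraints on the leading monomial of a semi-invariant -/

section LMConstraints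

theorem prod_split {V ρ : Type*} [Fintype V] [DecidableEq V] [Fintype ρ] (x y : ρ → V)
    (hx : Function.Injective x) (hy : Function.Injective y) (hxy : ∀ r r', x r ≠ y r')
    (F : V → ℂ) :
    ∏ v, F v = (∏ r, F (x r) * F (y r)) *
      ∏ v, (if v ∈ Set.range x ∨ v ∈ Set.range y then 1 else F v) := by
  classical
  have e : ∀ v, F v = ((if v ∈ Finset.univ.image x then F v else 1) *
      (if v ∈ Finset.univ.image y then F v else 1)) *
      (if v ∈ Set.range x ∨ v ∈ Set.range y then 1 else F v) := by
    intro v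
    by_cases h1 : v ∈ Set.range x
    · have h2 : v ∉ Set.range y := by
        obtain ⟨r, rfl⟩ := h1
        rintro ⟨r', h⟩
        exact hxy r r' h.symm
      simp only [Set.mem_range] at h1 h2
      simp [h1, h2]
    · by_cases h2 : v ∈ Set.range y
      · simp only [Set.mem_range] at h1 h2
        simp [h1, h2]
      · simp only [Set.mem_range] at h1 h2
        simp [h1, h2]
  rw [Finset.prod_congr rfl fun v _ => e v, Finset.prod_mul_distrib, Finset.prod_mul_distrib,
    Finset.prod_mul_distrib]
  congr 2
  · rw [Finset.prod_ite_mem, Finset.univ_inter, Finset.prod_image (fun _ _ _ _ h => hx h)]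
  · rw [Finset.prod_ite_mem, Finset.univ_inter, Finset.prod_image (fun _ _ _ _ h => hy h)]

theorem lm_ineq {V ρ : Type*} [Fintype V] [DecidableEq V] [Fintype ρ] [LinearOrder ρ]
    (f : MvPolynomial V ℂ) (x y : ρ → V)
    (hx : Function.Injective x) (hy : Function.Injective y) (hxy : ∀ r r', x r ≠ y r')
    (hinv : ∀ M M' : V → ℂ, (∀ r, M' (x r) = M (x r) + M (y r)) →
      (∀ v, v ∉ Set.range x → M' v = M v) → MvPolynomial.eval M' f = MvPolynomial.eval M f)
    (T : ℕ) (hT : ∀ m ∈ f.support, ∑ r, m (x r) = T)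
    (G : V → V → Prop) (hG1 : ∀ r' r, r' < r → G (x r') (x r)) (hG2 : ∀ r, G (x r) (y r))
    (m : V →₀ ℕ) (hm : m ∈ f.support)
    (hLM : ∀ m' ∈ f.support, m' = m ∨ ∃ v, m' v < m v ∧ ∀ w, G w v → m' w = m w) (s : ρ) :
    ∑ r with s ≤ r, m (x r) ≤ ∑ r with s < r, m (y r) := by
  classical
  let d : (V →₀ ℕ) → (ρ ⊕ V) → ℕ := fun i => Sum.elim (fun r => i (x r) + i (y r))
    (fun v => if v ∈ Set.range x ∨ v ∈ Set.range y then 0 else i v)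
  let a : (V →₀ ℕ) → ρ → ℕ := fun i r => i (x r)
  let b : (V →₀ ℕ) → ρ → ℕ := fun i r => i (y r)
  have hd : ∀ i, d i = d m → (∀ r, i (x r) + i (y r) = m (x r) + m (y r)) ∧
      ∀ v, ¬ (v ∈ Set.range x ∨ v ∈ Set.range y) → i v = m v := by
    intro i hi
    constructor
    · intro r; exact congrFun hi (Sum.inl r)
    · intro v hv
      have := congrFun hi (Sum.inr v)
      simpa only [d, Sum.elim_inr, if_neg hv] using this
  have key : ∀ X Y : ρ → ℂ, ∀ Z : ρ ⊕ V → ℂ, ∃ M : V → ℂ,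
      (∀ r, M (x r) = Z (Sum.inl r) * X r) ∧ (∀ r, M (y r) = Z (Sum.inl r) * Y r) ∧
      (∀ v, ¬ (v ∈ Set.range x ∨ v ∈ Set.range y) → M v = Z (Sum.inr v)) := by
    intro X Y Z
    refine ⟨Function.extend x (fun r => Z (Sum.inl r) * X r)
      (Function.extend y (fun r => Z (Sum.inl r) * Y r) (fun v => Z (Sum.inr v))), ?_, ?_, ?_⟩
    · intro r; rw [hx.extend_apply]
    · intro r
      rw [Function.extend_apply' _ _ _ (by rintro ⟨r', h⟩; exact hxy _ _ h), hy.extend_apply]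
    · intro v hv
      push Not at hv
      rw [Function.extend_apply' _ _ _ (fun h => hv.1 h),
        Function.extend_apply' _ _ _ (fun h => hv.2 h)]
  have ev : ∀ (X Y : ρ → ℂ) (Z : ρ ⊕ V → ℂ) (M : V → ℂ),
      (∀ r, M (x r) = Z (Sum.inl r) * X r) → (∀ r, M (y r) = Z (Sum.inl r) * Y r) →
      (∀ v, ¬ (v ∈ Set.range x ∨ v ∈ Set.range y) → M v = Z (Sum.inr v)) →
      MvPolynomial.eval M f = ∑ i ∈ f.support, (f.coeff i * ∏ r, (X r ^ a i r * Y r ^ b i r)) *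
        ∏ w, Z w ^ d i w := by
    intro X Y Z M h1 h2 h3
    rw [MvPolynomial.eval_eq']
    refine Finset.sum_congr rfl fun i _ => ?_
    rw [prod_split x y hx hy hxy, mul_assoc, Fintype.prod_sum_type, ← mul_assoc (∏ r, _),
      ← Finset.prod_mul_distrib]
    congr 2
    · refine Finset.prod_congr rfl fun r _ => ?_
      rw [h1, h2]
      simp only [a, b, d, Sum.elim_inl, pow_add, mul_pow]
      ring
    · refine Finset.prod_congr rfl fun v _ => ?_
      simp only [d, Sum.elim_inr]
      split_ifs with h
      · simp
      · rw [h3 v h]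
  have hTI : TInv (f.support.filter fun i => d i = d m) f.coeff a b Finset.univ := by
    intro X Y
    refine sep_monomials f.support _ _ d ?_ (d m)
    intro Z
    simp only [Finset.mem_univ, if_true]
    obtain ⟨M, m1, m2, m3⟩ := key X Y Z
    obtain ⟨M', n1, n2, n3⟩ := key (fun r => X r + Y r) Y Z
    rw [← ev X Y Z M m1 m2 m3, ← ev (fun r => X r + Y r) Y Z M' n1 n2 n3]
    apply hinv
    · intro r; rw [m1, m2, n1]; ring
    · intro v hv
      by_cases h : v ∈ Set.range y
      · obtain ⟨r, rfl⟩ := h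
        rw [n2, m2]
      · rw [n3 v (by tauto), m3 v (by tauto)]
  refine two_line (S := f.support.filter fun i => d i = d m) (c := f.coeff) (a := a) (b := b)
    (n := fun r => m (x r) + m (y r)) (T := T) ?_ ?_ ?_ hTI (Finset.mem_filter.2 ⟨hm, rfl⟩)
    (MvPolynomial.mem_support_iff.1 hm) ?_ s
  · intro i hi r
    exact (hd i (Finset.mem_filter.1 hi).2).1 r
  · intro i hi
    exact hT i (Finset.mem_filter.1 hi).1
  · intro i hi j hj hij
    have hi' := hd i (Finset.mem_filter.1 hi).2
    have hj' := hd j (Finset.mem_filter.1 hj).2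
    ext v
    by_cases h : v ∈ Set.range x ∨ v ∈ Set.range y
    · rcases h with ⟨r, rfl⟩ | ⟨r, rfl⟩
      · exact congrFun hij r
      · have h1 := hi'.1 r
        have h2 := hj'.1 r
        have h3 : i (x r) = j (x r) := congrFun hij r
        omega
    · rw [hi'.2 v h, hj'.2 v h]
  · intro i hi
    have hi' := hd i (Finset.mem_filter.1 hi).2
    rcases hLM i (Finset.mem_filter.1 hi).1 with h | ⟨v, hv, hv'⟩
    · left; rw [h]
    · right
      by_cases h : v ∈ Set.range x ∨ v ∈ Set.range y
      · rcases h with ⟨r, rfl⟩ | ⟨r, rfl⟩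
        · exact ⟨r, hv, fun r' hr' => hv' _ (hG1 r' r hr')⟩
        · exfalso
          have h1 := hi'.1 r
          have h2 := hv' _ (hG2 r)
          omega
      · exact absurd (hi'.2 v h) hv.ne

variable {K r0 r1 : ℕ}

theorem eval_glAct (f : KPoly K r0 r1) (g : Matrix (Fin r0) (Fin r0) ℂ)
    (h : Matrix (Fin r1) (Fin r1) ℂ) (M : KVar K r0 r1 → ℂ) :
    MvPolynomial.eval M (glAct g h f) = MvPolynomial.eval (fun v : KVar K r0 r1 =>
      ∑ j' : Fin r1, ∑ k' : Fin r0, (h⁻¹ v.2.1 j' * g k' v.2.2) * M (v.1, j', k')) f := by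
  have : (MvPolynomial.eval M).comp (glAct g h : KPoly K r0 r1 →ₐ[ℂ] KPoly K r0 r1).toRingHom =
    MvPolynomial.eval (fun v : KVar K r0 r1 =>
      ∑ j' : Fin r1, ∑ k' : Fin r0, (h⁻¹ v.2.1 j' * g k' v.2.2) * M (v.1, j', k')) := by
    apply MvPolynomial.ringHom_ext
    · intro r
      simp [glAct]
    · intro v
      simp [glAct]
  exact RingHom.congr_fun this f

theorem eval_semiInv {f : KPoly K r0 r1} {w0 w1 : ℤ} (hf : IsSemiInvariant f w0 w1)
    (g : Matrix (Fin r0) (Fin r0) ℂ)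
    (h : Matrix (Fin r1) (Fin r1) ℂ) (hg : IsUnit g.det) (hh : IsUnit h.det)
    (M : KVar K r0 r1 → ℂ) :
    MvPolynomial.eval (fun v : KVar K r0 r1 =>
      ∑ j' : Fin r1, ∑ k' : Fin r0, (h⁻¹ v.2.1 j' * g k' v.2.2) * M (v.1, j', k')) f =
      (g.det ^ w0 * h.det ^ w1) * MvPolynomial.eval M f := by
  rw [← eval_glAct, hf g h hg hh, map_mul, MvPolynomial.eval_C]

theorem eval_g {f : KPoly K r0 r1} {w0 w1 : ℤ} (hf : IsSemiInvariant f w0 w1)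
    (g : Matrix (Fin r0) (Fin r0) ℂ) (hg : IsUnit g.det) (M : KVar K r0 r1 → ℂ) :
    MvPolynomial.eval (fun v : KVar K r0 r1 => ∑ k' : Fin r0, g k' v.2.2 * M (v.1, v.2.1, k')) f =
      g.det ^ w0 * MvPolynomial.eval M f := by
  have := eval_semiInv hf g 1 hg (by simp) M
  rw [Matrix.det_one, one_zpow, mul_one] at this
  rw [← this]
  congr 1
  congr 1
  funext v
  rw [Finset.sum_eq_single v.2.1]
  · simp
  · intro b _ hb; simp [Matrix.one_apply_ne hb.symm]
  · simp

theorem eval_h {f : KPoly K r0 r1} {w0 w1 : ℤ} (hf : IsSemiInvariant f w0 w1)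
    (h k : Matrix (Fin r1) (Fin r1) ℂ) (hk : h * k = 1) (M : KVar K r0 r1 → ℂ) :
    MvPolynomial.eval (fun v : KVar K r0 r1 => ∑ j' : Fin r1, k v.2.1 j' * M (v.1, j', v.2.2)) f =
      h.det ^ w1 * MvPolynomial.eval M f := by
  have hd : IsUnit h.det := by
    apply IsUnit.of_mul_eq_one k.det
    rw [← Matrix.det_mul, hk, Matrix.det_one]
  have := eval_semiInv hf 1 h (by simp) hd M
  rw [Matrix.det_one, one_zpow, one_mul] at this
  rw [← this, Matrix.inv_eq_right_inv hk]
  congr 1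
  congr 1
  funext v
  refine Finset.sum_congr rfl fun j _ => ?_
  rw [Finset.sum_eq_single v.2.2]
  · simp
  · intro b _ hb; simp [Matrix.one_apply_ne hb]
  · simp

theorem torus {f : KPoly K r0 r1} (u : KVar K r0 r1 → ℂ) (κ : ℂ)
    (h : ∀ M, MvPolynomial.eval (fun v => u v * M v) f = κ * MvPolynomial.eval M f)
    (m : KVar K r0 r1 →₀ ℕ) (hm : m ∈ f.support) : ∏ v, u v ^ m v = κ := by
  classical
  have := sep_monomials f.support (fun i => f.coeff i * ∏ v, u v ^ i v) (fun i => κ * f.coeff i)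
    (fun i => ⇑i) (by
      intro Z
      have := h Z
      rw [MvPolynomial.eval_eq', MvPolynomial.eval_eq', Finset.mul_sum] at this
      convert this using 1
      · refine Finset.sum_congr rfl fun i _ => ?_
        simp only [mul_pow, Finset.prod_mul_distrib]
        ring
      · refine Finset.sum_congr rfl fun i _ => ?_
        ring) m
  have e : f.support.filter (fun i : KVar K r0 r1 →₀ ℕ => (⇑i : KVar K r0 r1 → ℕ) = ⇑m) = {m} := by
    ext i
    simp only [Finset.mem_filter, Finset.mem_singleton, DFunLike.coe_fn_eq]
    constructor
    · exact fun h => h.2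
    · rintro rfl; exact ⟨hm, rfl⟩
  simp only [e, Finset.sum_singleton] at this
  rw [mul_comm] at this
  exact mul_right_cancel₀ (MvPolynomial.mem_support_iff.1 hm) this

theorem two_zpow_inj {n : ℕ} {w : ℤ} (h : (2 : ℂ) ^ n = (2 : ℂ) ^ w) : w = n := by
  have h1 := congrArg norm h
  rw [norm_pow, norm_zpow, Complex.norm_ofNat, ← zpow_natCast] at h1
  exact (zpow_right_injective₀ (by norm_num) (by norm_num) h1).symm

theorem weight_g {f : KPoly K r0 r1} {w0 w1 : ℤ} (hf : IsSemiInvariant f w0 w1)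
    (m : KVar K r0 r1 →₀ ℕ) (hm : m ∈ f.support) (p : Fin r0) :
    w0 = (∑ l : Fin K ×ₗ Fin r1, m ((ofLex l).1, (ofLex l).2, p) : ℕ) := by
  classical
  apply two_zpow_inj
  let g : Matrix (Fin r0) (Fin r0) ℂ := Matrix.diagonal (fun k => if k = p then 2 else 1)
  have hg : g.det = 2 := by simp [g, Matrix.det_diagonal]
  have := torus (f := f) (fun v => if v.2.2 = p then 2 else 1) (2 ^ w0) (by
    intro M
    have := eval_g hf g (by rw [hg]; exact isUnit_iff_ne_zero.2 two_ne_zero) M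
    rw [hg] at this
    rw [← this]
    congr 2
    funext v
    rw [Finset.sum_eq_single v.2.2]
    · simp [g]
    · intro b _ hb; simp [g, Matrix.diagonal_apply_ne _ hb]
    · simp) m hm
  rw [← this, ← Finset.prod_pow_eq_pow_sum, Fintype.prod_prod_type]
  simp only [Fintype.prod_prod_type]
  have e : ∀ (i : Fin K) (j : Fin r1), ∏ k : Fin r0, (if k = p then (2 : ℂ) else 1) ^ m (i, j, k) =
      2 ^ m (i, j, p) := by
    intro i j
    rw [Finset.prod_eq_single p]
    · simp
    · intro b _ hb; simp [hb]
    · simp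
  simp only [e]
  rw [← Fintype.prod_prod_type' (f := fun i j => (2 : ℂ) ^ m (i, j, p))]
  exact Fintype.prod_equiv ofLex _ _ (fun _ => rfl)

theorem weight_h {f : KPoly K r0 r1} {w0 w1 : ℤ} (hf : IsSemiInvariant f w0 w1)
    (m : KVar K r0 r1 →₀ ℕ) (hm : m ∈ f.support) (q : Fin r1) :
    -w1 = (∑ l : Fin K ×ₗ Fin r0, m ((ofLex l).1, q, (ofLex l).2) : ℕ) := by
  classical
  apply two_zpow_inj
  let g : Matrix (Fin r1) (Fin r1) ℂ := Matrix.diagonal (fun k => if k = q then 2 else 1)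
  let h : Matrix (Fin r1) (Fin r1) ℂ := Matrix.diagonal (fun k => if k = q then 2⁻¹ else 1)
  have hh : h.det = 2⁻¹ := by simp [h, Matrix.det_diagonal]
  have := torus (f := f) (fun v => if v.2.1 = q then 2 else 1) (2 ^ (-w1)) (by
    intro M
    have := eval_h hf h g (by
      simp only [g, h]
      rw [Matrix.diagonal_mul_diagonal, ← Matrix.diagonal_one]
      congr 1
      funext k
      split_ifs <;> norm_num) M
    rw [hh, inv_zpow, ← zpow_neg] at this
    rw [← this]
    congr 2
    funext v
    rw [Finset.sum_eq_single v.2.1]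
    · simp [g]
    · intro b _ hb; simp [g, Matrix.diagonal_apply_ne _ hb.symm]
    · simp) m hm
  rw [← this, ← Finset.prod_pow_eq_pow_sum, Fintype.prod_prod_type]
  simp only [Fintype.prod_prod_type]
  have e : ∀ (i : Fin K), ∏ j : Fin r1, ∏ k : Fin r0,
      (if j = q then (2 : ℂ) else 1) ^ m (i, j, k) = ∏ k : Fin r0, 2 ^ m (i, q, k) := by
    intro i
    rw [Finset.prod_eq_single q]
    · simp
    · intro b _ hb; simp [hb]
    · simp
  simp only [e]
  rw [← Fintype.prod_prod_type' (f := fun i k => (2 : ℂ) ^ m (i, q, k))]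
  exact Fintype.prod_equiv ofLex _ _ (fun _ => rfl)

theorem ineq_g {f : KPoly K r0 r1} {w0 w1 : ℤ} (hf : IsSemiInvariant f w0 w1)
    (m : KVar K r0 r1 →₀ ℕ) (hm : IsLM f m) (p p' : Fin r0) (hp : p < p')
    (s : Fin K ×ₗ Fin r1) :
    ∑ l with s ≤ l, m ((ofLex l).1, (ofLex l).2, p) ≤
      ∑ l with s < l, m ((ofLex l).1, (ofLex l).2, p') := by
  classical
  have hw := weight_g hf m hm.1 p
  refine lm_ineq f (fun l : Fin K ×ₗ Fin r1 => ((ofLex l).1, (ofLex l).2, p))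
    (fun l : Fin K ×ₗ Fin r1 => ((ofLex l).1, (ofLex l).2, p')) ?_ ?_ ?_ ?_
    (∑ l : Fin K ×ₗ Fin r1, m ((ofLex l).1, (ofLex l).2, p)) ?_ VarGT ?_ ?_ m hm.1 hm.2 s
  · intro a b h
    simp only [Prod.mk.injEq] at h
    exact ofLex.injective (Prod.ext h.1 h.2.1)
  · intro a b h
    simp only [Prod.mk.injEq] at h
    exact ofLex.injective (Prod.ext h.1 h.2.1)
  · intro a b h
    simp only [Prod.mk.injEq] at h
    exact hp.ne h.2.2
  · intro M M' h1 h2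
    have := eval_g hf (Matrix.transvection p' p 1)
      (by rw [Matrix.det_transvection_of_ne _ _ hp.ne']; exact isUnit_one) M
    rw [Matrix.det_transvection_of_ne _ _ hp.ne', one_zpow, one_mul] at this
    rw [← this]
    congr 2
    funext v
    obtain ⟨i, j, k⟩ := v
    simp only [Matrix.transvection, Matrix.add_apply, add_mul, Finset.sum_add_distrib,
      Matrix.one_apply, ite_mul, one_mul, zero_mul, Finset.sum_ite_eq', Finset.mem_univ, if_true]
    by_cases hk : k = p
    · subst hk
      have := h1 (toLex (i, j))
      simp only [ofLex_toLex] at this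
      rw [this]
      congr 1
      rw [Finset.sum_eq_single p']
      · simp
      · intro b _ hb; simp [Matrix.single_apply, hb.symm]
      · simp
    · rw [h2 (i, j, k) (by
        rintro ⟨l, hl⟩
        simp only [Prod.mk.injEq] at hl
        exact hk hl.2.2.symm)]
      rw [Finset.sum_eq_zero, add_zero]
      intro b _
      simp [Matrix.single_apply, Ne.symm hk]
  · intro m' hm'
    have := weight_g hf m' hm' p
    rw [this] at hw
    exact_mod_cast hw
  · intro a b hab
    rw [Prod.Lex.lt_iff] at hab
    rcases hab with h | ⟨h, h'⟩
    · exact Or.inl h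
    · exact Or.inr ⟨h, Or.inl h'⟩
  · intro a
    exact Or.inr ⟨rfl, Or.inr ⟨rfl, hp⟩⟩

theorem ineq_h {f : KPoly K r0 r1} {w0 w1 : ℤ} (hf : IsSemiInvariant f w0 w1)
    (m : KVar K r0 r1 →₀ ℕ) (hm : IsLM f m) (q q' : Fin r1) (hq : q < q')
    (s : Fin K ×ₗ Fin r0) :
    ∑ l with s ≤ l, m ((ofLex l).1, q, (ofLex l).2) ≤
      ∑ l with s < l, m ((ofLex l).1, q', (ofLex l).2) := by
  classical
  have hw := weight_h hf m hm.1 q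
  refine lm_ineq f (fun l : Fin K ×ₗ Fin r0 => ((ofLex l).1, q, (ofLex l).2))
    (fun l : Fin K ×ₗ Fin r0 => ((ofLex l).1, q', (ofLex l).2)) ?_ ?_ ?_ ?_
    (∑ l : Fin K ×ₗ Fin r0, m ((ofLex l).1, q, (ofLex l).2)) ?_ VarGT ?_ ?_ m hm.1 hm.2 s
  · intro a b h
    simp only [Prod.mk.injEq] at h
    exact ofLex.injective (Prod.ext h.1 h.2.2)
  · intro a b h
    simp only [Prod.mk.injEq] at h
    exact ofLex.injective (Prod.ext h.1 h.2.2)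
  · intro a b h
    simp only [Prod.mk.injEq] at h
    exact hq.ne h.2.1
  · intro M M' h1 h2
    have := eval_h hf (Matrix.transvection q q' (-1)) (Matrix.transvection q q' 1)
      (by rw [Matrix.transvection_mul_transvection_same (i := q) (j := q') hq.ne]; simp) M
    rw [Matrix.det_transvection_of_ne _ _ hq.ne, one_zpow, one_mul] at this
    rw [← this]
    congr 2
    funext v
    obtain ⟨i, j, k⟩ := v
    simp only [Matrix.transvection, Matrix.add_apply, add_mul, Finset.sum_add_distrib,
      Matrix.one_apply, ite_mul, one_mul, zero_mul, Finset.sum_ite_eq, Finset.mem_univ, if_true]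
    by_cases hk : j = q
    · subst hk
      have := h1 (toLex (i, k))
      simp only [ofLex_toLex] at this
      rw [this]
      congr 1
      rw [Finset.sum_eq_single q']
      · simp
      · intro b _ hb; simp [Matrix.single_apply, hb.symm]
      · simp
    · rw [h2 (i, j, k) (by
        rintro ⟨l, hl⟩
        simp only [Prod.mk.injEq] at hl
        exact hk hl.2.1.symm)]
      rw [Finset.sum_eq_zero, add_zero]
      intro b _
      simp [Matrix.single_apply, Ne.symm hk]
  · intro m' hm'
    have := weight_h hf m' hm' q
    rw [this] at hw
    exact_mod_cast hw
  · intro a b hab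
    rw [Prod.Lex.lt_iff] at hab
    rcases hab with h | ⟨h, h'⟩
    · exact Or.inl h
    · exact Or.inr ⟨h, Or.inr ⟨rfl, h'⟩⟩
  · intro a
    exact Or.inr ⟨rfl, Or.inl hq⟩

end LMConstraints

/-! ### Part 5: constructing a semi-standard pair with given leading monomial -/

section Construct

theorem count_filter {Λ : Type*} [Fintype Λ] [DecidableEq Λ] {c : ℕ} (t : Fin c → Λ) (n : Λ → ℕ)
    (hn : ∀ l, (Finset.univ.filter fun k => t k = l).card = n l) (P : Λ → Prop)
    [DecidablePred P] :
    (Finset.univ.filter fun k => P (t k)).card = ∑ l with P l, n l := by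
  rw [Finset.card_eq_sum_card_fiberwise (f := t) (t := Finset.univ.filter P)]
  · refine Finset.sum_congr rfl fun l hl => ?_
    rw [← hn l, Finset.filter_filter]
    congr 1
    ext k
    simp only [Finset.mem_filter, Finset.mem_univ, true_and] at hl ⊢
    constructor
    · exact fun h => h.2
    · rintro rfl; exact ⟨hl, rfl⟩
  · intro k hk
    simpa using hk

theorem col_strict {Λ : Type*} [Fintype Λ] [LinearOrder Λ] {c : ℕ} (t t' : Fin c → Λ)
    (n n' : Λ → ℕ) (ht : Monotone t) (ht' : Monotone t')
    (hn : ∀ l, (Finset.univ.filter fun k => t k = l).card = n l)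
    (hn' : ∀ l, (Finset.univ.filter fun k => t' k = l).card = n' l)
    (h : ∀ s, ∑ l with s ≤ l, n l ≤ ∑ l with s < l, n' l) (k : Fin c) : t k < t' k := by
  by_contra hcon
  push Not at hcon
  have h1 := h (t k)
  rw [← count_filter t n hn, ← count_filter t' n' hn'] at h1
  have h2 : (Finset.Ici k).card ≤ (Finset.univ.filter fun k' => t k ≤ t k').card := by
    apply Finset.card_le_card
    intro k' hk'
    simp only [Finset.mem_Ici, Finset.mem_filter, Finset.mem_univ, true_and] at hk' ⊢
    exact ht hk'
  have h3 : (Finset.univ.filter fun k' => t k < t' k').card ≤ (Finset.Ioi k).card := by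
    apply Finset.card_le_card
    intro k' hk'
    simp only [Finset.mem_Ioi, Finset.mem_filter, Finset.mem_univ, true_and] at hk' ⊢
    by_contra hk
    exact absurd (hk'.trans_le ((ht' (not_lt.1 hk)).trans hcon)) (lt_irrefl _)
  rw [Fin.card_Ici] at h2
  rw [Fin.card_Ioi] at h3
  have := k.isLt
  omega

theorem row_unique {Λ : Type*} [LinearOrder Λ] {c : ℕ} (t t' : Fin c → Λ)
    (ht : Monotone t) (ht' : Monotone t') (S : Finset Λ) (hS : ∀ k, t k ∈ S) (hS' : ∀ k, t' k ∈ S)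
    (h : ∀ l, (Finset.univ.filter fun k => t k = l).card =
      (Finset.univ.filter fun k => t' k = l).card) : t = t' := by
  have hc : ∀ s, (Finset.univ.filter fun k => t k ≤ s).card =
      (Finset.univ.filter fun k => t' k ≤ s).card := by
    intro s
    rw [Finset.card_eq_sum_card_fiberwise (f := t) (t := S.filter (· ≤ s)),
      Finset.card_eq_sum_card_fiberwise (f := t') (t := S.filter (· ≤ s))]
    · refine Finset.sum_congr rfl fun l hl => ?_
      have hl' := (Finset.mem_filter.1 hl).2
      rw [Finset.filter_filter, Finset.filter_filter]
      convert h l using 2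
      · ext k
        simp only [Finset.mem_filter, Finset.mem_univ, true_and]
        constructor
        · exact fun h => h.2
        · rintro rfl; exact ⟨hl', rfl⟩
      · ext k
        simp only [Finset.mem_filter, Finset.mem_univ, true_and]
        constructor
        · exact fun h => h.2
        · rintro rfl; exact ⟨hl', rfl⟩
    · intro k hk
      have hk' : t' k ≤ s := by simpa using hk
      simpa using ⟨hS' k, hk'⟩
    · intro k hk
      have hk' : t k ≤ s := by simpa using hk
      simpa using ⟨hS k, hk'⟩
  have key : ∀ u : Fin c → Λ, Monotone u → ∀ k s,
      u k ≤ s ↔ (k : ℕ) < (Finset.univ.filter fun k => u k ≤ s).card := by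
    intro u hu k s
    constructor
    · intro h
      have : (Finset.Iic k).card ≤ (Finset.univ.filter fun k => u k ≤ s).card := by
        apply Finset.card_le_card
        intro k' hk'
        simp only [Finset.mem_Iic, Finset.mem_filter, Finset.mem_univ, true_and] at hk' ⊢
        exact (hu hk').trans h
      rw [Fin.card_Iic] at this
      omega
    · intro h
      by_contra hcon
      have : (Finset.univ.filter fun k => u k ≤ s).card ≤ (Finset.Iio k).card := by
        apply Finset.card_le_card
        intro k' hk'
        simp only [Finset.mem_Iio, Finset.mem_filter, Finset.mem_univ, true_and] at hk' ⊢
        by_contra hk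
        exact hcon ((hu (not_lt.1 hk)).trans hk')
      rw [Fin.card_Iio] at this
      omega
  funext k
  apply le_antisymm
  · rw [key t ht, hc, ← key t' ht']
  · rw [key t' ht', ← hc, ← key t ht]

theorem card_row {Λ : Type*} [Fintype Λ] [LinearOrder Λ] (n : Λ → ℕ) :
    Fintype.card (Σₗ l : Λ, Fin (n l)) = ∑ l, n l := by
  have : Fintype.card (Σₗ l : Λ, Fin (n l)) = Fintype.card (Σ l : Λ, Fin (n l)) :=
    Fintype.card_congr ofLex
  rw [this]
  simp

/-- The sorted row with content `n`. -/
noncomputable def rowIso {Λ : Type*} [Fintype Λ] [LinearOrder Λ] (n : Λ → ℕ) (c : ℕ)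
    (h : ∑ l, n l = c) : Fin c ≃o (Σₗ l : Λ, Fin (n l)) :=
  Fintype.orderIsoFinOfCardEq _ ((card_row n).trans h)

theorem rowIso_mono {Λ : Type*} [Fintype Λ] [LinearOrder Λ] (n : Λ → ℕ) (c : ℕ)
    (h : ∑ l, n l = c) : Monotone fun k => (ofLex (rowIso n c h k)).1 := by
  intro k k' hk
  have := (rowIso n c h).monotone hk
  rw [Sigma.Lex.le_def] at this
  rcases this with h | ⟨h, _⟩
  · exact h.le
  · exact h.le

theorem rowIso_count {Λ : Type*} [Fintype Λ] [LinearOrder Λ] (n : Λ → ℕ) (c : ℕ)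
    (h : ∑ l, n l = c) (l : Λ) :
    (Finset.univ.filter fun k => (ofLex (rowIso n c h k)).1 = l).card = n l := by
  classical
  rw [← Fintype.card_subtype]
  have e : {k // (ofLex (rowIso n c h k)).1 = l} ≃ Fin (n l) :=
    ((rowIso n c h).toEquiv.subtypeEquiv (q := fun z => (ofLex z).1 = l) (fun _ => Iff.rfl)).trans
      ((ofLex.subtypeEquiv (q := fun z : (Σ l : Λ, Fin (n l)) => z.1 = l) (fun _ => Iff.rfl)).trans
        (Equiv.sigmaSubtype (β := fun l => Fin (n l)) l))
  rw [Fintype.card_congr e, Fintype.card_fin]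

variable {K r0 r1 : ℕ}

theorem exists_pair (m : KVar K r0 r1 →₀ ℕ) (cm cp : ℕ)
    (hm : ∀ p : Fin r0, ∑ l : Fin K ×ₗ Fin r1, m ((ofLex l).1, (ofLex l).2, p) = cm)
    (hp : ∀ q : Fin r1, ∑ l : Fin K ×ₗ Fin r0, m ((ofLex l).1, q, (ofLex l).2) = cp)
    (im : ∀ p p' : Fin r0, p < p' → ∀ s : Fin K ×ₗ Fin r1,
      ∑ l with s ≤ l, m ((ofLex l).1, (ofLex l).2, p) ≤
        ∑ l with s < l, m ((ofLex l).1, (ofLex l).2, p'))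
    (ip : ∀ q q' : Fin r1, q < q' → ∀ s : Fin K ×ₗ Fin r0,
      ∑ l with s ≤ l, m ((ofLex l).1, q, (ofLex l).2) ≤
        ∑ l with s < l, m ((ofLex l).1, q', (ofLex l).2)) :
    ∃ L : LinkedPair K r0 r1 cm cp, IsSemiStandardPair L ∧ monExpP L = m := by
  classical
  let e := fun p : Fin r0 => rowIso (fun l : Fin K ×ₗ Fin r1 => m ((ofLex l).1, (ofLex l).2, p))
    cm (hm p)
  let e' := fun q : Fin r1 => rowIso (fun l : Fin K ×ₗ Fin r0 => m ((ofLex l).1, q, (ofLex l).2))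
    cp (hp q)
  let toF : Fin r0 × Fin cm → Fin r1 × Fin cp := fun b =>
    let z := ofLex (e b.1 b.2)
    ((ofLex z.1).2, (e' (ofLex z.1).2).symm (toLex ⟨toLex ((ofLex z.1).1, b.1), z.2⟩))
  let invF : Fin r1 × Fin cp → Fin r0 × Fin cm := fun b =>
    let z := ofLex (e' b.1 b.2)
    ((ofLex z.1).2, (e (ofLex z.1).2).symm (toLex ⟨toLex ((ofLex z.1).1, b.1), z.2⟩))
  have hto : ∀ p c z, e p c = z → toF (p, c) = ((ofLex (ofLex z).1).2,
      (e' (ofLex (ofLex z).1).2).symm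
        (toLex ⟨toLex ((ofLex (ofLex z).1).1, p), (ofLex z).2⟩)) := by
    rintro p c _ rfl; rfl
  have hin : ∀ p c z, e' p c = z → invF (p, c) = ((ofLex (ofLex z).1).2,
      (e (ofLex (ofLex z).1).2).symm
        (toLex ⟨toLex ((ofLex (ofLex z).1).1, p), (ofLex z).2⟩)) := by
    rintro p c _ rfl; rfl
  have li : Function.LeftInverse invF toF := by
    rintro ⟨p, c⟩
    rw [hto p c _ rfl, hin _ _ _ (OrderIso.apply_symm_apply _ _)]
    refine Prod.ext rfl ?_
    simp only
    rw [OrderIso.symm_apply_eq]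
    rfl
  have ri : Function.RightInverse invF toF := by
    rintro ⟨p, c⟩
    rw [hin p c _ rfl, hto _ _ _ (OrderIso.apply_symm_apply _ _)]
    refine Prod.ext rfl ?_
    simp only
    rw [OrderIso.symm_apply_eq]
    rfl
  let L : LinkedPair K r0 r1 cm cp :=
    { Tm := fun p c => ofLex (ofLex (e p c)).1
      Tp := fun q c => ofLex (ofLex (e' q c)).1
      link := ⟨toF, invF, li, ri⟩
      link_row := fun p c => rfl
      link_label := by
        intro p c
        simp only [Equiv.coe_fn_mk, toF, OrderIso.apply_symm_apply, ofLex_toLex] }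
  have tolt : ∀ {n : ℕ} (a b : Fin K ×ₗ Fin n), a < b → LabelLT (ofLex a) (ofLex b) := by
    intro n a b h
    rw [Prod.Lex.lt_iff] at h
    exact h
  have tole : ∀ {n : ℕ} (a b : Fin K ×ₗ Fin n), a ≤ b → LabelLE (ofLex a) (ofLex b) := by
    intro n a b h
    rw [Prod.Lex.le_iff] at h
    exact h
  refine ⟨L, ⟨⟨?_, ?_⟩, ⟨?_, ?_⟩, ?_⟩, ?_⟩
  · intro p c c' h
    exact tole _ _ (rowIso_mono _ cm (hm p) h)
  · intro c p p' h
    exact tolt _ _ (col_strict (fun k => (ofLex (e p k)).1) (fun k => (ofLex (e p' k)).1) _ _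
      (rowIso_mono _ cm (hm p)) (rowIso_mono _ cm (hm p')) (rowIso_count _ cm (hm p))
      (rowIso_count _ cm (hm p')) (im p p' h) c)
  · intro p c c' h
    exact tole _ _ (rowIso_mono _ cp (hp p) h)
  · intro c p p' h
    exact tolt _ _ (col_strict (fun k => (ofLex (e' p k)).1) (fun k => (ofLex (e' p' k)).1) _ _
      (rowIso_mono _ cp (hp p)) (rowIso_mono _ cp (hp p')) (rowIso_count _ cp (hp p))
      (rowIso_count _ cp (hp p')) (ip p p' h) c)
  · intro p c c' h hc
    have h1 : e p c < e p c' := (e p).strictMono hc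
    have h2 : (ofLex (e p c)).1 = (ofLex (e p c')).1 := ofLex.injective h
    change (toF (p, c)).2 < (toF (p, c')).2
    rw [hto p c _ rfl, hto p c' _ rfl]
    generalize e p c = z at h1 h2
    generalize e p c' = z' at h1 h2
    rw [Sigma.Lex.lt_def] at h1
    rcases h1 with h1 | ⟨h1, h3⟩
    · exact absurd h2 (ne_of_lt h1)
    · induction z with | h z => ?_
      induction z' with | h z' => ?_
      obtain ⟨l, k⟩ := z
      obtain ⟨l', k'⟩ := z'
      simp only [ofLex_toLex] at h2 h3 ⊢
      subst h2
      apply (OrderIso.strictMono _)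
      rw [Sigma.Lex.lt_def]
      exact Or.inr ⟨rfl, h3⟩
  · ext ⟨i, q, k⟩
    unfold monExpP
    rw [← Fintype.sum_prod_type' (f := fun q c =>
      Finsupp.single (((L.Tp q c).1, q, (L.Tp q c).2) : KVar K r0 r1) 1), sum_single_apply]
    have h1 := rowIso_count _ cp (hp q) (toLex (i, k))
    simp only [ofLex_toLex] at h1
    rw [← h1, Nat.card_eq_fintype_card, Fintype.card_subtype]
    symm
    refine Finset.card_bij (fun c _ => (q, c)) ?_ ?_ ?_
    · intro c hc
      simp only [Finset.mem_filter, Finset.mem_univ, true_and] at hc ⊢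
      have : L.Tp q c = (i, k) := congrArg ofLex hc
      rw [this]
    · intro c _ c' _ h
      exact (Prod.mk.inj h).2
    · rintro ⟨q', c⟩ hc
      simp only [Finset.mem_filter, Finset.mem_univ, true_and, Prod.mk.injEq] at hc
      obtain ⟨h2, rfl, h3⟩ := hc
      refine ⟨c, ?_, rfl⟩
      simp only [Finset.mem_filter, Finset.mem_univ, true_and]
      exact ofLex.injective (Prod.ext h2 h3)

end Construct

/-! ### Part 6: uniqueness of the semi-standard pair with given leading monomial -/

section Unique

variable {K r0 r1 cm cp : ℕ}

theorem countP (L : LinkedPair K r0 r1 cm cp) (q : Fin r1) (l : Fin K × Fin r0) :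
    (Finset.univ.filter fun c => L.Tp q c = l).card = monExpP L (l.1, q, l.2) := by
  classical
  unfold monExpP
  rw [← Fintype.sum_prod_type' (f := fun q c =>
      Finsupp.single (((L.Tp q c).1, q, (L.Tp q c).2) : KVar K r0 r1) 1), sum_single_apply]
  rw [Nat.card_eq_fintype_card, Fintype.card_subtype]
  refine Finset.card_bij (fun c _ => (q, c)) ?_ ?_ ?_
  · intro c hc
    simp only [Finset.mem_filter, Finset.mem_univ, true_and] at hc ⊢
    rw [hc]
  · intro c _ c' _ h
    exact (Prod.mk.inj h).2
  · rintro ⟨q', c⟩ hc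
    simp only [Finset.mem_filter, Finset.mem_univ, true_and, Prod.mk.injEq] at hc
    obtain ⟨h2, rfl, h3⟩ := hc
    refine ⟨c, ?_, rfl⟩
    simp only [Finset.mem_filter, Finset.mem_univ, true_and]
    exact Prod.ext h2 h3

theorem countM (L : LinkedPair K r0 r1 cm cp) (p : Fin r0) (l : Fin K × Fin r1) :
    (Finset.univ.filter fun c => L.Tm p c = l).card = monExpP L (l.1, l.2, p) := by
  classical
  rw [← monA_one]
  unfold monA
  rw [sum_single_apply, Nat.card_eq_fintype_card, Fintype.card_subtype]
  refine Finset.card_bij (fun c _ => (p, c)) ?_ ?_ ?_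
  · intro c hc
    simp only [Finset.mem_filter, Finset.mem_univ, true_and] at hc ⊢
    have := L.link_row p c
    rw [← hc, ← this]
    rfl
  · intro c _ c' _ h
    exact (Prod.mk.inj h).2
  · rintro ⟨p', c⟩ hc
    simp only [Finset.mem_filter, Finset.mem_univ, true_and, Prod.mk.injEq] at hc
    obtain ⟨h2, h3, h4⟩ := hc
    have h4' : p' = p := h4
    subst h4'
    refine ⟨c, ?_, rfl⟩
    simp only [Finset.mem_filter, Finset.mem_univ, true_and]
    refine Prod.ext h2 ?_
    rw [← L.link_row p' c]
    exact h3

theorem sum_count {Λ : Type*} [Fintype Λ] [DecidableEq Λ] {c : ℕ} (t : Fin c → Λ) :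
    ∑ l, (Finset.univ.filter fun k => t k = l).card = c := by
  rw [← Finset.card_eq_sum_card_fiberwise (f := t) (t := Finset.univ)]
  · simp
  · intro k _; simp

theorem tab_unique {rows cols n : ℕ} (T T' : Fin rows → Fin cols → Fin K × Fin n)
    (hT : IsSemiStandardTab T) (hT' : IsSemiStandardTab T')
    (h : ∀ i l, (Finset.univ.filter fun c => T i c = l).card =
      (Finset.univ.filter fun c => T' i c = l).card) : T = T' := by
  funext i
  have := row_unique (Λ := Fin K ×ₗ Fin n) (fun c => toLex (T i c)) (fun c => toLex (T' i c))
    (by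
      intro c c' hc
      rw [Prod.Lex.le_iff]
      exact hT.1 i c c' hc)
    (by
      intro c c' hc
      rw [Prod.Lex.le_iff]
      exact hT'.1 i c c' hc) Finset.univ (fun _ => Finset.mem_univ _) (fun _ => Finset.mem_univ _)
    (by
      intro l
      convert h i (ofLex l) using 1
      · congr 1
      · congr 1)
  funext c
  exact toLex.injective (congrFun this c)

theorem pair_unique (L L' : LinkedPair K r0 r1 cm cp) (hL : IsSemiStandardPair L)
    (hL' : IsSemiStandardPair L') (h : monExpP L = monExpP L') : L = L' := by
  have hm : L.Tm = L'.Tm := tab_unique _ _ hL.1 hL'.1 (fun p l => by rw [countM, countM, h])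
  have hp : L.Tp = L'.Tp := tab_unique _ _ hL.2.1 hL'.2.1 (fun p l => by rw [countP, countP, h])
  have rng : ∀ (M : LinkedPair K r0 r1 cm cp) (p : Fin r0) (l : Fin K × Fin r1),
      Set.range (fun c : {c // M.Tm p c = l} => (M.link (p, c.1)).2) =
        {c' | M.Tp l.2 c' = (l.1, p)} := by
    intro M p l
    ext c'
    constructor
    · rintro ⟨⟨c, hc⟩, rfl⟩
      have h1 := M.link_label p c
      have h2 := M.link_row p c
      rw [h2, hc] at h1
      exact h1
    · intro hc'
      have hc'' : M.Tp l.2 c' = (l.1, p) := hc'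
      obtain ⟨b, hb⟩ := M.link.surjective (l.2, c')
      have h1 := M.Tp_eq b
      have h2 := M.Tm_eq b
      rw [hb] at h1 h2
      rw [hc'', Prod.mk.injEq] at h1
      obtain ⟨p', c⟩ := b
      have h3 : p = p' := h1.2
      subst h3
      refine ⟨⟨c, ?_⟩, ?_⟩
      · change M.Tm p c = _ at h2
        rw [h2]
        exact Prod.ext h1.1.symm rfl
      · simp only [hb]
  have hl : L.link = L'.link := by
    ext1 ⟨p, c⟩
    have hrow : (L.link (p, c)).1 = (L'.link (p, c)).1 := by
      rw [L.link_row, L'.link_row, hm]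
    refine Prod.ext hrow ?_
    have s1 : StrictMono (fun x : {x // L.Tm p x = L.Tm p c} => (L.link (p, x.1)).2) := by
      rintro ⟨x, hx⟩ ⟨y, hy⟩ hxy
      exact hL.2.2 p x y (hx.trans hy.symm) hxy
    have s2 : StrictMono (fun x : {x // L.Tm p x = L.Tm p c} => (L'.link (p, x.1)).2) := by
      rintro ⟨x, hx⟩ ⟨y, hy⟩ hxy
      exact hL'.2.2 p x y (by rw [← hm]; exact hx.trans hy.symm) hxy
    have r1' := rng L p (L.Tm p c)
    have r2' := rng L' p (L.Tm p c)
    rw [← hp, ← r1', ← hm] at r2'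
    have := (StrictMono.range_inj s2 s1).1 r2'
    exact (congrFun this ⟨c, rfl⟩).symm
  cases L
  cases L'
  simp only at hm hp hl
  subst hm hp hl
  rfl

end Unique

/-! ### Part 7: the main theorem -/

section Final

variable {K r0 r1 : ℕ}

/-- The exponent vector in lexicographic order. -/
def lexExp (m : KVar K r0 r1 →₀ ℕ) : Lex ((Fin K ×ₗ (Fin r1 ×ₗ Fin r0)) → ℕ) :=
  toLex fun v => m ((ofLex v).1, (ofLex (ofLex v).2).1, (ofLex (ofLex v).2).2)

theorem lexExp_lt (m m' : KVar K r0 r1 →₀ ℕ) : lexExp m < lexExp m' ↔ MonLT m m' := by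
  have hv : ∀ v w : Fin K ×ₗ (Fin r1 ×ₗ Fin r0), v < w ↔
      VarGT ((ofLex v).1, (ofLex (ofLex v).2).1, (ofLex (ofLex v).2).2)
        ((ofLex w).1, (ofLex (ofLex w).2).1, (ofLex (ofLex w).2).2) := by
    intro v w
    rw [Prod.Lex.lt_iff, Prod.Lex.lt_iff]
    rfl
  constructor
  · rintro ⟨v, h1, h2⟩
    refine ⟨_, h2, ?_⟩
    rintro ⟨i, j, k⟩ hw
    exact h1 (toLex (i, toLex (j, k))) ((hv _ _).2 hw)
  · rintro ⟨⟨i, j, k⟩, h1, h2⟩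
    refine ⟨toLex (i, toLex (j, k)), ?_, h1⟩
    intro w hw
    exact h2 _ ((hv _ _).1 hw)

theorem lexExp_inj (m m' : KVar K r0 r1 →₀ ℕ) (h : lexExp m = lexExp m') : m = m' := by
  ext ⟨i, j, k⟩
  exact congrFun (toLex.injective h) (toLex (i, toLex (j, k)))

theorem exists_LM (f : KPoly K r0 r1) (hf : f ≠ 0) : ∃ m, IsLM f m := by
  have hne : f.support.Nonempty := by
    rwa [Finset.nonempty_iff_ne_empty, Ne, MvPolynomial.support_eq_empty]
  obtain ⟨m, hm, hmax⟩ := Finset.exists_max_image f.support lexExp hne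
  refine ⟨m, hm, fun m' hm' => ?_⟩
  rcases (hmax m' hm').lt_or_eq with h | h
  · exact Or.inr ((lexExp_lt _ _).1 h)
  · exact Or.inl (lexExp_inj _ _ h)

theorem semiInv_pair {f : KPoly K r0 r1} (h0 : 1 ≤ r0) (h1 : 1 ≤ r1) {w0 w1 : ℤ}
    (hf : IsSemiInvariant f w0 w1) (m : KVar K r0 r1 →₀ ℕ) (hm : IsLM f m) :
    ∃ (cm cp : ℕ) (L : LinkedPair K r0 r1 cm cp), IsSemiStandardPair L ∧ monExpP L = m ∧
      w0 = cm ∧ w1 = -(cp : ℤ) := by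
  have a0 := weight_g hf m hm.1 ⟨0, h0⟩
  have a1 := weight_h hf m hm.1 ⟨0, h1⟩
  generalize (∑ l : Fin K ×ₗ Fin r1, m ((ofLex l).1, (ofLex l).2, ⟨0, h0⟩)) = cm at a0
  generalize (∑ l : Fin K ×ₗ Fin r0, m ((ofLex l).1, ⟨0, h1⟩, (ofLex l).2)) = cp at a1
  obtain ⟨L, hL, hLm⟩ := exists_pair m cm cp
    (fun p => by
      have := weight_g hf m hm.1 p
      rw [a0] at this
      exact_mod_cast this.symm)
    (fun q => by
      have := weight_h hf m hm.1 q
      rw [a1] at this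
      exact_mod_cast this.symm)
    (ineq_g hf m hm) (ineq_h hf m hm)
  exact ⟨cm, cp, L, hL, hLm, a0, by omega⟩

/-- The index type of the family. -/
abbrev SSP (K r0 r1 : ℕ) := Σ cm : ℕ, Σ cp : ℕ,
          {L : LinkedPair K r0 r1 cm cp // IsSemiStandardPair L}

theorem ssp_inj (h0 : 1 ≤ r0) (h1 : 1 ≤ r1) (A B : SSP K r0 r1)
    (h : monExpP A.2.2.1 = monExpP B.2.2.1) : A = B := by
  obtain ⟨cm, cp, L, hL⟩ := A
  obtain ⟨cm', cp', L', hL'⟩ := B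
  simp only at h
  have e1 : cm = cm' := by
    rw [← sum_count (L.Tm ⟨0, h0⟩), ← sum_count (L'.Tm ⟨0, h0⟩)]
    exact Finset.sum_congr rfl fun l _ => by rw [countM, countM, h]
  have e2 : cp = cp' := by
    rw [← sum_count (L.Tp ⟨0, h1⟩), ← sum_count (L'.Tp ⟨0, h1⟩)]
    exact Finset.sum_congr rfl fun l _ => by rw [countP, countP, h]
  subst e1 e2
  have := pair_unique L L' hL hL' h
  subst this
  rfl

theorem ssp_linInd (h0 : 1 ≤ r0) (h1 : 1 ≤ r1) :
    LinearIndependent ℂ (fun L : SSP K r0 r1 => pairPoly L.2.2.1) := by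
  classical
  rw [linearIndependent_iff']
  intro s g hg
  by_contra hcon
  push Not at hcon
  obtain ⟨i, hi, hgi⟩ := hcon
  obtain ⟨A, hA, hmax⟩ := Finset.exists_max_image (s.filter fun i => g i ≠ 0)
    (fun i => lexExp (monExpP i.2.2.1)) ⟨i, Finset.mem_filter.2 ⟨hi, hgi⟩⟩
  rw [Finset.mem_filter] at hA
  have h2 := congrArg (MvPolynomial.coeff (monExpP A.2.2.1)) hg
  rw [MvPolynomial.coeff_sum, MvPolynomial.coeff_zero, Finset.sum_eq_single A] at h2
  · rw [MvPolynomial.coeff_smul, smul_eq_mul] at h2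
    exact mul_ne_zero hA.2 (pairPoly_coeff_ne A.2.2.1 A.2.2.2) h2
  · intro B hB hBA
    rw [MvPolynomial.coeff_smul, smul_eq_mul]
    by_contra hne
    have hne' := mul_ne_zero_iff.1 hne
    rcases pairPoly_coeff_le B.2.2.1 B.2.2.2 _ hne'.2 with h | h
    · exact hBA (ssp_inj h0 h1 _ _ h).symm
    · have := hmax B (Finset.mem_filter.2 ⟨hB, hne'.1⟩)
      exact absurd ((lexExp_lt _ _).2 h) (not_lt.2 this)
  · intro h; exact absurd hA.1 h

theorem ssp_span (h0 : 1 ≤ r0) (h1 : 1 ≤ r1) {w0 w1 : ℤ}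
    (x : Lex ((Fin K ×ₗ (Fin r1 ×ₗ Fin r0)) → ℕ)) :
    ∀ (f : KPoly K r0 r1), IsSemiInvariant f w0 w1 → (∀ m ∈ f.support, lexExp m ≤ x) →
    f ∈ Submodule.span ℂ (Set.range fun L : SSP K r0 r1 => pairPoly L.2.2.1) := by
  induction x using WellFoundedLT.induction with
  | ind x ih =>
  intro f hf hx
  by_cases hf0 : f = 0
  · rw [hf0]; exact Submodule.zero_mem _
  obtain ⟨m, hm⟩ := exists_LM f hf0
  obtain ⟨cm, cp, L, hL, hLm, rfl, rfl⟩ := semiInv_pair h0 h1 hf m hm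
  have hne := pairPoly_coeff_ne L hL
  have hle := pairPoly_coeff_le L hL
  rw [hLm] at hne hle
  set κ : ℂ := f.coeff m / (pairPoly L).coeff m with hκ
  have hLs : pairPoly L ∈ Submodule.span ℂ
      (Set.range fun L : SSP K r0 r1 => pairPoly L.2.2.1) :=
    Submodule.subset_span ⟨⟨cm, cp, L, hL⟩, rfl⟩
  have hf' : IsSemiInvariant (f - κ • pairPoly L) (cm : ℤ) (-(cp : ℤ)) := by
    intro g h hg hh
    rw [map_sub, map_smul, hf g h hg hh, pairPoly_semiInv L g h hg hh, mul_sub, mul_smul_comm]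
  have hsupp : ∀ m' ∈ (f - κ • pairPoly L).support, lexExp m' < lexExp m := by
    intro m' hm'
    rw [MvPolynomial.mem_support_iff, MvPolynomial.coeff_sub, MvPolynomial.coeff_smul,
      smul_eq_mul] at hm'
    rw [lexExp_lt]
    by_cases h2 : f.coeff m' = 0
    · rw [h2, zero_sub, neg_ne_zero] at hm'
      rcases hle m' (mul_ne_zero_iff.1 hm').2 with h | h
      · rw [h] at h2
        exact absurd h2 (MvPolynomial.mem_support_iff.1 hm.1)
      · exact h
    · rcases hm.2 m' (MvPolynomial.mem_support_iff.2 h2) with h | h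
      · exfalso
        apply hm'
        rw [h, hκ, div_mul_cancel₀ _ hne, sub_self]
      · exact h
  have main : f - κ • pairPoly L ∈ Submodule.span ℂ
      (Set.range fun L : SSP K r0 r1 => pairPoly L.2.2.1) := by
    by_cases hz : f - κ • pairPoly L = 0
    · rw [hz]; exact Submodule.zero_mem _
    obtain ⟨m1, hm1⟩ := exists_LM _ hz
    refine ih (lexExp m1) ((hsupp m1 hm1.1).trans_le (hx m hm.1)) _ hf' ?_
    intro m' hm'
    rcases hm1.2 m' hm' with h | h
    · rw [h]
    · exact ((lexExp_lt _ _).2 h).le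
  have := Submodule.add_mem _ main (Submodule.smul_mem _ κ hLs)
  rwa [sub_add_cancel] at this

end Final

/-- The semi-invariants attached to semi-standard linked
tableaux pairs form a `ℂ`-vector space basis of the semi-invariant ring:
the family is linearly independent and spans the semi-invariant ring. -/
theorem statement10 (K r0 r1 : ℕ) (hK : 1 ≤ K) (h0 : 1 ≤ r0) (h1 : 1 ≤ r1) :
    LinearIndependent ℂ
      (fun L : Σ cm : ℕ, Σ cp : ℕ,
          {L : LinkedPair K r0 r1 cm cp // IsSemiStandardPair L} =>
        pairPoly L.2.2.1) ∧
    Submodule.span ℂ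
      (Set.range fun L : Σ cm : ℕ, Σ cp : ℕ,
          {L : LinkedPair K r0 r1 cm cp // IsSemiStandardPair L} =>
        pairPoly L.2.2.1) = semiInvariantRing K r0 r1 := by
  refine ⟨ssp_linInd h0 h1, le_antisymm ?_ ?_⟩
  · rw [Submodule.span_le]
    rintro _ ⟨L, rfl⟩
    exact Submodule.subset_span ⟨_, _, pairPoly_semiInv L.2.2.1⟩
  · unfold semiInvariantRing
    rw [Submodule.span_le]
    rintro f ⟨w0, w1, hf⟩
    by_cases hf0 : f = 0
    · rw [hf0]; exact Submodule.zero_mem _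
    obtain ⟨m, hm⟩ := exists_LM f hf0
    refine ssp_span h0 h1 (lexExp m) f hf ?_
    intro m' hm'
    rcases hm.2 m' hm' with h | h
    · rw [h]
    · exact ((lexExp_lt _ _).2 h).le
end QuiverSAGBI
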